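/- arXiv:math/0204340 — 2 statements merged into one kernel-verified Lean document; each statement's English description precedes it below -/
import Mathlib

section
/- Let f : (ℝⁿ ⊕ ℂᵐ)⁺ → (ℝⁿ ⊕ ℂ^{m+k})⁺ be a continuous T-equivariant map between one-point compactifications, where T = U(1) acts trivially on ℝⁿ and by complex scalar multiplication on the complex factors. If the restriction of f to the fixed-point spheres (ℝⁿ)⁺ → (ℝⁿ)⁺ has degree 1, then k ≥ 0. -/
open OnePoint

/-- Extension of a map to one-point compactifications, sending `∞` to `∞`. -/
noncomputable def OnePoint.map' {α β : Type*} (g : α → β) : OnePoint α → OnePoint β :=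
  fun x => Option.elim x ∞ (fun a => OnePoint.some (g a))


namespace BU

section chains
variable {E : Type*}

/-- all codimension-one faces of an ordered simplex -/
def bd : List E → List (List E)
  | [] => []
  | x :: l => l :: (bd l).map (List.cons x)

/-- mod 2 coboundary of a cochain on ordered simplices (augmented) -/
def cd (φ : List E → ZMod 2) (l : List E) : ZMod 2 := ((bd l).map φ).sum

theorem z2 (a : ZMod 2) : a + a = 0 := CharTwo.add_self_eq_zero a

@[simp] theorem cd_nil (φ : List E → ZMod 2) : cd φ [] = 0 := by simp [cd, bd]

theorem cd_cons (φ : List E → ZMod 2) (x : E) (l : List E) :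
    cd φ (x :: l) = φ l + cd (fun l' => φ (x :: l')) l := by
  simp [cd, bd, Function.comp_def]

theorem cd_congr {φ ψ : List E → ZMod 2} {l : List E} (h : ∀ l' ∈ bd l, φ l' = ψ l') :
    cd φ l = cd ψ l := by
  unfold cd
  rw [List.map_congr_left h]

theorem cd_add (φ ψ : List E → ZMod 2) (l : List E) :
    cd (fun l => φ l + ψ l) l = cd φ l + cd ψ l := by
  simp [cd, List.sum_map_add]

theorem cd_zero (l : List E) : cd (fun _ => 0) l = 0 := by
  simp [cd]

theorem cd_cd (φ : List E → ZMod 2) (l : List E) : cd (cd φ) l = 0 := by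
  induction l generalizing φ with
  | nil => simp
  | cons x l ih =>
    rw [cd_cons]
    have : (fun l' => cd φ (x :: l')) = fun l' => φ l' + cd (fun l'' => φ (x :: l'')) l' := by
      funext l'; rw [cd_cons]
    rw [this, cd_add, ih, add_zero, z2]

theorem bd_sublist {l l' : List E} (h : l' ∈ bd l) : l'.Sublist l := by
  induction l generalizing l' with
  | nil => simp [bd] at h
  | cons x l ih =>
    simp only [bd, List.mem_cons, List.mem_map] at h
    rcases h with rfl | ⟨a, ha, rfl⟩
    · exact List.sublist_cons_self _ _
    · exact (ih ha).cons_cons x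

theorem bd_length {l l' : List E} (h : l' ∈ bd l) : l'.length + 1 = l.length := by
  induction l generalizing l' with
  | nil => simp [bd] at h
  | cons x l ih =>
    simp only [bd, List.mem_cons, List.mem_map] at h
    rcases h with rfl | ⟨a, ha, rfl⟩
    · simp
    · simp [ih ha]

theorem cd_map {G : Type*} (f : E → G) (φ : List G → ZMod 2) (l : List E) :
    cd (fun l => φ (l.map f)) l = cd φ (l.map f) := by
  induction l generalizing φ with
  | nil => simp
  | cons x l ih => simp only [List.map_cons, cd_cons, ih (fun l' => φ (f x :: l'))]

theorem cd_perm {φ : List E → ZMod 2} (hφ : ∀ l l', l.Perm l' → φ l = φ l') {l l' : List E}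
    (h : l.Perm l') : cd φ l = cd φ l' := by
  induction h generalizing φ with
  | nil => rfl
  | cons x h ih =>
    rw [cd_cons, cd_cons, hφ _ _ h, ih]
    intro a b hab
    exact hφ _ _ (hab.cons x)
  | swap x y l =>
    simp only [cd_cons]
    rw [cd_congr (φ := fun l' => φ (y :: x :: l')) (ψ := fun l' => φ (x :: y :: l'))
      (fun l' _ => hφ _ _ (List.Perm.swap _ _ _))]
    ring
  | trans _ _ ih1 ih2 => rw [ih1 hφ, ih2 hφ]

end chains

section subdiv
variable {E : Type*} [NormedAddCommGroup E] [NormedSpace ℝ E]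

noncomputable def bary (l : List E) : E := (l.length : ℝ)⁻¹ • l.sum

/-- cochain-level barycentric subdivision, for lists of length `k` -/
noncomputable def sdk : ℕ → (List E → ZMod 2) → List E → ZMod 2
  | 0, φ, l => φ l
  | k + 1, φ, l => cd (sdk k (fun l' => φ (bary l :: l'))) l

theorem sdk_add (k : ℕ) (φ ψ : List E → ZMod 2) (l : List E) :
    sdk k (fun l => φ l + ψ l) l = sdk k φ l + sdk k ψ l := by
  induction k generalizing φ ψ l with
  | zero => rfl
  | succ k ih =>
    simp only [sdk]
    rw [← cd_add]
    exact cd_congr fun l' _ => ih _ _ _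

theorem sdk_cd (k : ℕ) (φ : List E → ZMod 2) (l : List E) (hl : l.length = k + 1) :
    sdk (k + 1) (cd φ) l = cd (sdk k φ) l := by
  induction k generalizing φ l with
  | zero =>
    obtain ⟨x, rfl⟩ := List.length_eq_one_iff.1 hl
    simp [sdk, cd_cons]
  | succ k ih =>
    rw [sdk]
    simp only [cd_cons]
    rw [cd_congr (fun l' _ => sdk_add (k + 1) _ _ l'), cd_add]
    rw [cd_congr (φ := sdk (k + 1) (cd _)) (fun l' hl' => ih _ l' (by
      have := bd_length hl'; omega)), cd_cd, add_zero]

noncomputable def sd (φ : List E → ZMod 2) (l : List E) : ZMod 2 := sdk l.length φ l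

theorem sd_cd (φ : List E → ZMod 2) : sd (cd φ) = cd (sd φ) := by
  funext l
  cases l with
  | nil => simp [sd, sdk]
  | cons x l =>
    unfold sd
    rw [List.length_cons, sdk_cd _ _ _ rfl]
    refine cd_congr fun l' hl' => ?_
    have := bd_length hl'
    simp at this
    rw [this]

theorem sd_add (φ ψ : List E → ZMod 2) :
    sd (fun l => φ l + ψ l) = fun l => sd φ l + sd ψ l := by
  funext l; exact sdk_add _ _ _ _

theorem bary_map (T : E →ₗ[ℝ] E) (l : List E) : bary (l.map T) = T (bary l) := by
  simp [bary, map_list_sum]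

theorem sdk_map (T : E →ₗ[ℝ] E) (k : ℕ) (φ : List E → ZMod 2) (l : List E) :
    sdk k (fun l => φ (l.map T)) l = sdk k φ (l.map T) := by
  induction k generalizing φ l with
  | zero => rfl
  | succ k ih =>
    simp only [sdk]
    rw [← cd_map]
    refine cd_congr fun l' _ => ?_
    rw [← ih]
    simp [bary_map]

theorem sd_map (T : E →ₗ[ℝ] E) (φ : List E → ZMod 2) :
    sd (fun l => φ (l.map T)) = fun l => sd φ (l.map T) := by
  funext l
  simp [sd, sdk_map]

theorem bary_mem {C : Set E} (hC : Convex ℝ C) {l : List E} (hl : ∀ x ∈ l, x ∈ C)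
    (hne : l ≠ []) : bary l ∈ C := by
  have hpos : (0 : ℝ) < l.length := by
    have := List.length_pos_iff.2 hne
    exact_mod_cast this
  have h1 : bary l = ∑ i : Fin l.length, (l.length : ℝ)⁻¹ • l.get i := by
    rw [bary, ← Finset.smul_sum]
    congr 1
    simp
  rw [h1]
  refine hC.sum_mem (fun i _ => by positivity) ?_ (fun i _ => hl _ (List.get_mem _ _))
  simp [hpos.ne']

theorem sum_sub_norm_le (x : E) {d : ℝ} (l : List E) (h : ∀ y ∈ l, dist y x ≤ d) :
    ‖l.sum - (l.length : ℝ) • x‖ ≤ l.length * d := by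
  induction l with
  | nil => simp
  | cons a l ih =>
    have h1 := ih (fun y hy => h y (List.mem_cons_of_mem _ hy))
    have h2 := h a (by simp)
    rw [dist_eq_norm] at h2
    have : (a :: l).sum - ((a :: l).length : ℝ) • x = (a - x) + (l.sum - (l.length : ℝ) • x) := by
      simp [add_smul]; abel
    rw [this]
    refine (norm_add_le _ _).trans ?_
    simp only [List.length_cons, Nat.cast_add, Nat.cast_one]
    linarith

theorem dist_bary {l : List E} {d : ℝ} (hd : ∀ x ∈ l, ∀ y ∈ l, dist x y ≤ d) {x : E} (hx : x ∈ l)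
    {n : ℕ} (hn : l.length ≤ n) : dist x (bary l) ≤ (1 - (n : ℝ)⁻¹) * d := by
  classical
  have hd0 : 0 ≤ d := dist_nonneg.trans (hd x hx x hx)
  have hp := List.perm_cons_erase hx
  have hlen := hp.length_eq
  simp only [List.length_cons] at hlen
  have hsum : l.sum = x + (l.erase x).sum := by rw [hp.sum_eq]; simp
  have h1 := sum_sub_norm_le x (l.erase x) (d := d) (fun y hy => hd y (List.mem_of_mem_erase hy) x hx)
  set k := (l.erase x).length with hk
  have hk0 : (0 : ℝ) < (k : ℝ) + 1 := by positivity
  have h2 : bary l - x = ((k : ℝ) + 1)⁻¹ • ((l.erase x).sum - (k : ℝ) • x) := by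
    rw [bary, hlen, hsum]
    push_cast
    rw [eq_inv_smul_iff₀ hk0.ne', smul_sub, smul_inv_smul₀ hk0.ne', add_smul]
    simp; abel
  rw [dist_comm, dist_eq_norm, h2, norm_smul, Real.norm_of_nonneg (by positivity)]
  have h3 : ((k : ℝ) + 1)⁻¹ * (k * d) = (1 - ((k : ℝ) + 1)⁻¹) * d := by
    field_simp; ring
  have h4 : (n : ℝ)⁻¹ ≤ ((k : ℝ) + 1)⁻¹ := by
    apply inv_anti₀ hk0
    have : k + 1 ≤ n := by omega
    exact_mod_cast this
  calc _ ≤ ((k : ℝ) + 1)⁻¹ * (k * d) := by gcongr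
    _ = (1 - ((k : ℝ) + 1)⁻¹) * d := h3
    _ ≤ _ := by gcongr

theorem sdk_congr (n : ℕ) (k : ℕ) (hk : k ≤ n) {C : Set E} (hC : Convex ℝ C) {d : ℝ}
    {φ ψ : List E → ZMod 2} {l : List E} (hlen : l.length = k) (hl : ∀ x ∈ l, x ∈ C)
    (hd : ∀ x ∈ l, ∀ y ∈ l, dist x y ≤ d)
    (h : ∀ l' : List E, l'.length = k → (∀ x ∈ l', x ∈ C) →
      (∀ x ∈ l', ∀ y ∈ l', dist x y ≤ (1 - (n : ℝ)⁻¹) * d) → φ l' = ψ l') :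
    sdk k φ l = sdk k ψ l := by
  induction k generalizing C φ ψ l with
  | zero =>
    rw [List.length_eq_zero_iff] at hlen
    subst hlen
    exact h [] rfl (by simp) (by simp)
  | succ k ih =>
    simp only [sdk]
    refine cd_congr fun l0 hl0 => ?_
    have hsub := (bd_sublist hl0).subset
    have hlne : l ≠ [] := by rintro rfl; simp at hlen
    obtain ⟨x0, hx0⟩ := List.exists_mem_of_ne_nil l hlne
    have hd0 : 0 ≤ d := dist_nonneg.trans (hd x0 hx0 x0 hx0)
    have hκ : 0 ≤ (1 - (n : ℝ)⁻¹) * d := by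
      refine dist_nonneg.trans (dist_bary hd hx0 (by omega : l.length ≤ n))
    refine ih (by omega) (C := C ∩ Metric.closedBall (bary l) ((1 - (n : ℝ)⁻¹) * d))
      (hC.inter (convex_closedBall _ _)) (by have := bd_length hl0; omega)
      (fun x hx => ⟨hl x (hsub hx), ?_⟩) (fun x hx y hy => hd x (hsub hx) y (hsub hy)) ?_
    · exact dist_bary hd (hsub hx) (by omega)
    · intro l' hl' hC' hd'
      refine h _ (by simp [hl']) ?_ ?_
      · intro x hx
        rcases List.mem_cons.1 hx with rfl | hx
        · exact bary_mem hC hl hlne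
        · exact (hC' x hx).1
      · intro x hx y hy
        rcases List.mem_cons.1 hx with rfl | hx <;> rcases List.mem_cons.1 hy with rfl | hy
        · simpa using hκ
        · rw [dist_comm]; exact (hC' y hy).2
        · exact (hC' x hx).2
        · exact hd' x hx y hy

/-- locality of iterated subdivision -/
theorem sdr_congr (n r : ℕ) {C : Set E} (hC : Convex ℝ C) {d : ℝ}
    {φ ψ : List E → ZMod 2} {l : List E} (hlen : l.length ≤ n) (hl : ∀ x ∈ l, x ∈ C)
    (hd : ∀ x ∈ l, ∀ y ∈ l, dist x y ≤ d)
    (h : ∀ l' : List E, l'.length = l.length → (∀ x ∈ l', x ∈ C) →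
      (∀ x ∈ l', ∀ y ∈ l', dist x y ≤ (1 - (n : ℝ)⁻¹) ^ r * d) → φ l' = ψ l') :
    sd^[r] φ l = sd^[r] ψ l := by
  induction r generalizing d l with
  | zero => exact h l rfl hl (by simpa using hd)
  | succ r ih =>
    rw [Function.iterate_succ_apply', Function.iterate_succ_apply']
    refine sdk_congr n _ hlen hC rfl hl hd fun l' hl' hC' hd' => ?_
    refine ih (by omega) hC' hd' fun l'' h1 h2 h3 => h l'' (by omega) h2 ?_
    intro x hx y hy
    refine (h3 x hx y hy).trans (le_of_eq ?_)
    ring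

theorem sdr_cd (r : ℕ) (φ : List E → ZMod 2) : sd^[r] (cd φ) = cd (sd^[r] φ) := by
  induction r with
  | zero => rfl
  | succ r ih => rw [Function.iterate_succ_apply', ih, sd_cd, Function.iterate_succ_apply']

theorem sdr_add (r : ℕ) (φ ψ : List E → ZMod 2) :
    sd^[r] (fun l => φ l + ψ l) = fun l => sd^[r] φ l + sd^[r] ψ l := by
  induction r with
  | zero => rfl
  | succ r ih => simp only [Function.iterate_succ_apply', ih, sd_add]

theorem sdr_map (T : E →ₗ[ℝ] E) (r : ℕ) (φ : List E → ZMod 2) :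
    sd^[r] (fun l => φ (l.map T)) = fun l => sd^[r] φ (l.map T) := by
  induction r with
  | zero => rfl
  | succ r ih => simp only [Function.iterate_succ_apply', ih, sd_map]

theorem sdr_nil (r : ℕ) (φ : List E → ZMod 2) : sd^[r] φ [] = φ [] := by
  induction r with
  | zero => rfl
  | succ r ih => rw [Function.iterate_succ_apply', sd]; simp [sdk, ih]

end subdiv
section fan

def alt : ℕ → List ℕ → ZMod 2
  | _, [] => 1
  | s, c :: l => if c % 2 = s then alt (1 - s) l else 0

/-- flip the sign of the labels of index at least `N` -/
def flip (N c : ℕ) : ℕ := if c / 2 < N then c else if c % 2 = 0 then c + 1 else c - 1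

def chi (N : ℕ) : ℕ → List ℕ → ZMod 2
  | 0, l => if ∀ x ∈ l, N ≤ x / 2 then alt 0 l else 0
  | _ + 1, [] => 0
  | c + 1, a :: l => if a = 2 * (N - (c + 1)) then chi N c l else 0

def Good (l : List ℕ) : Prop := ∀ x ∈ l, ∀ y ∈ l, x / 2 = y / 2 → x = y

theorem cd_alt (s : ℕ) (hs : s ≤ 1) (l : List ℕ) : cd (alt s) l = alt s l + alt (1 - s) l := by
  induction l generalizing s with
  | nil => simp [alt, z2]
  | cons a l ih =>
    rw [cd_cons]
    have hs' : 1 - (1 - s) = s := by omega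
    by_cases h : a % 2 = s
    · have h' : ¬ (a % 2 = 1 - s) := by omega
      have : (fun l' => alt s (a :: l')) = alt (1 - s) := by funext l'; simp [alt, h]
      rw [this, ih (1 - s) (by omega)]
      simp only [alt, h, hs', if_true]
      rw [if_neg (by omega), add_comm (alt (1 - s) l), ← add_assoc, z2]; simp
    · have h' : a % 2 = 1 - s := by omega
      have : (fun l' => alt s (a :: l')) = fun _ => 0 := by funext l'; simp [alt, h]
      rw [this, cd_zero]
      simp only [alt, h', hs', if_true]
      rw [if_neg (by omega)]; ring

theorem alt_flip (N s : ℕ) (hs : s ≤ 1) (l : List ℕ) (h : ∀ x ∈ l, N ≤ x / 2) :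
    alt s (l.map (flip N)) = alt (1 - s) l := by
  induction l generalizing s with
  | nil => simp [alt]
  | cons a l ih =>
    have ha := h a (by simp)
    simp only [List.map_cons, alt]
    rw [ih (1 - s) (by omega) (fun x hx => h x (by simp [hx]))]
    have : flip N a % 2 = s ↔ a % 2 = 1 - s := by
      unfold flip; split_ifs <;> omega
    simp [this]

theorem flip_div (N c : ℕ) : flip N c / 2 = c / 2 := by
  unfold flip; split_ifs <;> omega

theorem flip_small {N c : ℕ} (h : c / 2 < N) : flip N c = c := by
  simp [flip, h]

theorem fan (N c : ℕ) (hc : c ≤ N) (l : List ℕ) (hs : l.Pairwise (· ≤ ·)) (hg : Good l)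
    (hge : ∀ x ∈ l, N - c ≤ x / 2) :
    cd (chi N c) l = chi N c l + chi N c (l.map (flip N)) := by
  induction c generalizing l with
  | zero =>
    have hge' : ∀ x ∈ l, N ≤ x / 2 := by simpa using hge
    have h1 : cd (chi N 0) l = cd (alt 0) l := by
      refine cd_congr fun l' hl' => ?_
      simp only [chi]
      rw [if_pos fun x hx => hge' x ((bd_sublist hl').subset hx)]
    rw [h1, cd_alt 0 (by omega)]
    simp only [chi]
    rw [if_pos hge', if_pos (by simpa [flip_div] using hge'), alt_flip N 0 (by omega) _ hge']
  | succ c ih =>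
    cases l with
    | nil => simp [chi]
    | cons a l =>
      rw [cd_cons]
      obtain ⟨hs1, hs2⟩ := List.pairwise_cons.1 hs
      have hga := hge a (by simp)
      have hgl : Good l := fun x hx y hy => hg x (by simp [hx]) y (by simp [hy])
      by_cases ha : a = 2 * (N - (c + 1))
      · have hfa : flip N a = a := flip_small (by omega)
        have e1 : (fun l' => chi N (c + 1) (a :: l')) = chi N c := by
          funext l'; simp [chi, ha]
        have e1' : ∀ l', chi N (c + 1) (a :: l') = chi N c l' := fun l' => congrFun e1 l'
        rw [e1]
        simp only [List.map_cons, hfa, e1']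
        by_cases hdup : a ∈ l
        · -- duplicate
          obtain ⟨b, l2, rfl⟩ : ∃ b l2, l = b :: l2 := by
            cases l with
            | nil => simp at hdup
            | cons b l2 => exact ⟨b, l2, rfl⟩
          have hb : b = a := by
            have h1 := hs1 b (by simp)
            rcases List.mem_cons.1 hdup with h | h
            · exact h.symm
            · have := (List.pairwise_cons.1 hs2).1 a h
              omega
          subst hb
          have e2 : ∀ l', chi N c (b :: l') = 0 := by
            intro l'
            cases c with
            | zero =>
              simp only [chi]
              rw [if_neg]
              intro h
              have := h b (by simp)
              omega
            | succ c =>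
              simp only [chi]
              rw [if_neg (by omega)]
          rw [cd_cons]
          simp only [List.map_cons, hfa, e2, cd_zero, add_zero]
          rw [e1', z2]
        · have hgt : ∀ x ∈ l, N - c ≤ x / 2 := by
            intro x hx
            have h1 := hs1 x hx
            have h2 : a ≠ x := fun h => hdup (h ▸ hx)
            have h3 : a / 2 ≠ x / 2 := fun h => h2 (hg a (by simp) x (by simp [hx]) h)
            omega
          rw [ih (by omega) l hs2 hgl hgt]
          have : chi N (c + 1) l = 0 := by
            cases l with
            | nil => rfl
            | cons b l2 =>
              simp only [chi]
              rw [if_neg]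
              have := hgt b (by simp)
              omega
          rw [this, zero_add]
      · have e1 : (fun l' => chi N (c + 1) (a :: l')) = fun _ => 0 := by
          funext l'; simp [chi, ha]
        have e2 : chi N (c + 1) l = 0 := by
          cases l with
          | nil => rfl
          | cons b l2 =>
            simp only [chi]
            rw [if_neg]
            intro hb
            have h1 := hs1 b (by simp)
            have := hg a (by simp) b (by simp)
            omega
        have e3 : flip N a ≠ 2 * (N - (c + 1)) := by
          unfold flip; split_ifs <;> omega
        rw [e1, e2, cd_zero]
        simp only [List.map_cons]
        rw [show chi N (c + 1) (a :: l) = 0 from congrFun e1 l]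
        simp [chi, e3]

def psi (N : ℕ) (l : List ℕ) : ZMod 2 := chi N N (l.insertionSort (· ≤ ·))

theorem psi_sorted (N : ℕ) {l : List ℕ} (h : l.Pairwise (· ≤ ·)) : psi N l = chi N N l := by
  rw [psi, h.insertionSort_eq]

theorem psi_perm (N : ℕ) (l l' : List ℕ) (h : l.Perm l') : psi N l = psi N l' := by
  unfold psi
  congr 1
  exact List.Perm.eq_of_pairwise' (List.pairwise_insertionSort _ _) (List.pairwise_insertionSort _ _)
    (((List.perm_insertionSort _ _).trans h).trans (List.perm_insertionSort _ _).symm)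

theorem Good.perm {l l' : List ℕ} (h : l.Perm l') (hg : Good l) : Good l' :=
  fun x hx y hy => hg x (h.mem_iff.2 hx) y (h.mem_iff.2 hy)

theorem cd_psi (N : ℕ) (l : List ℕ) (hg : Good l) :
    cd (psi N) l = psi N l + psi N (l.map (flip N)) := by
  have hp := List.perm_insertionSort (· ≤ ·) l
  have hs := List.pairwise_insertionSort (· ≤ ·) l
  set l0 := l.insertionSort (· ≤ ·) with hl0
  have hg0 : Good l0 := hg.perm hp.symm
  rw [cd_perm (psi_perm N) hp.symm, psi_perm N _ _ hp.symm, psi_perm N _ _ (hp.symm.map (flip N))]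
  have hs' : (l0.map (flip N)).Pairwise (· ≤ ·) := by
    rw [List.pairwise_map]
    refine hs.imp_of_mem ?_
    intro a b ha hb hab
    by_cases h : a / 2 = b / 2
    · rw [hg0 a ha b hb h]
    · have h1 := flip_div N a
      have h2 := flip_div N b
      omega
  rw [psi_sorted N hs, psi_sorted N hs', ← fan N N le_rfl l0 hs hg0 (by simp)]
  exact cd_congr fun l' hl' => psi_sorted N (hs.sublist (bd_sublist hl'))

theorem chi_step1 (k c : ℕ) (hc : c ≤ k) (l : List ℕ) (hl : l.length = c + 1)
    (h : ∀ x ∈ l, x / 2 ≤ k ∧ x ≠ 2 * k + 1) : chi k c l = chi (k + 1) (c + 1) l := by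
  induction c generalizing l with
  | zero =>
    obtain ⟨a, rfl⟩ := List.length_eq_one_iff.1 hl
    have := h a (by simp)
    by_cases ha : a = 2 * k
    · subst ha; simp [chi, alt]
    · have : ¬ k ≤ a / 2 := by omega
      simp [chi, ha, this]
  | succ c ih =>
    cases l with
    | nil => simp at hl
    | cons a l =>
      simp only [chi]
      rw [← ih (by omega) l (by simpa using hl) (fun x hx => h x (by simp [hx]))]
      congr 2
      omega

theorem chi_step2 (k c : ℕ) (l : List ℕ) (hl : l.length = c + 1)
    (h : ∀ x ∈ l, x / 2 ≤ k ∧ x ≠ 2 * k) : chi k c l = 0 := by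
  induction c generalizing l with
  | zero =>
    obtain ⟨a, rfl⟩ := List.length_eq_one_iff.1 hl
    have := h a (by simp)
    simp only [chi, alt]
    split_ifs with h1 h2
    · have := h1 a (by simp)
      omega
    · rfl
    · rfl
  | succ c ih =>
    cases l with
    | nil => simp at hl
    | cons a l =>
      simp only [chi]
      rw [ih l (by simpa using hl) (fun x hx => h x (by simp [hx]))]
      simp

theorem chi_mem (N c : ℕ) (l : List ℕ) (h : chi N c l ≠ 0) (i : ℕ) (hi : N - c ≤ i) (hi2 : i < N) :
    2 * i ∈ l := by
  induction c generalizing l with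
  | zero => omega
  | succ c ih =>
    cases l with
    | nil => simp [chi] at h
    | cons a l =>
      simp only [chi] at h
      split_ifs at h with ha
      · by_cases hh : i = N - (c + 1)
        · subst hh; simp [ha]
        · exact List.mem_cons_of_mem _ (ih l h (by omega))
      · exact absurd rfl h

theorem psi_step (k : ℕ) (l : List ℕ) (hg : Good l) (hl : l.length = k + 1)
    (h : ∀ x ∈ l, x / 2 ≤ k ∧ x ≠ 2 * k + 1) : cd (psi k) l = psi (k + 1) l := by
  rw [cd_psi k l hg]
  have h1 : psi k l = psi (k + 1) l := by
    unfold psi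
    apply chi_step1 k k le_rfl _ (by simp [hl])
    intro x hx
    exact h x ((List.perm_insertionSort _ _).mem_iff.1 hx)
  have h2 : psi k (l.map (flip k)) = 0 := by
    unfold psi
    apply chi_step2 _ _ _ (by simp [hl])
    intro x hx
    have := (List.perm_insertionSort _ _).mem_iff.1 hx
    obtain ⟨y, hy, rfl⟩ := List.mem_map.1 this
    have := h y hy
    refine ⟨by rw [flip_div]; exact this.1, ?_⟩
    unfold flip; split_ifs <;> omega
  rw [h1, h2, add_zero]

theorem psi_eq_zero_of_notMem (N i : ℕ) (hi : i < N) (l : List ℕ) (h : 2 * i ∉ l) :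
    psi N l = 0 := by
  by_contra hne
  exact h ((List.perm_insertionSort _ _).mem_iff.1 (chi_mem N N _ hne i (by omega) hi))

theorem alt_lt (s : ℕ) (l : List ℕ) (hs : s ≤ 1) (h : alt s l ≠ 0) (hl : l.Pairwise (· ≤ ·)) :
    l.Pairwise (· < ·) := by
  induction l generalizing s with
  | nil => simp
  | cons a l ih =>
    simp only [alt] at h
    split_ifs at h with ha
    · obtain ⟨h1, h2⟩ := List.pairwise_cons.1 hl
      have h3 := ih (1 - s) (by omega) h h2
      refine List.pairwise_cons.2 ⟨?_, h3⟩
      cases l with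
      | nil => simp
      | cons b l =>
        have hb : b % 2 = 1 - s := by
          by_contra hb
          simp [alt, hb] at h
        have hab := h1 b (by simp)
        intro x hx
        rcases List.mem_cons.1 hx with rfl | hx
        · omega
        · have := (List.pairwise_cons.1 h3).1 x hx
          omega
    · exact absurd rfl h

theorem chi_lt (N c : ℕ) (hc : c ≤ N) (l : List ℕ) (h : chi N c l ≠ 0)
    (hl : l.Pairwise (· ≤ ·)) :
    l.Pairwise (· < ·) ∧ ∀ x ∈ l, 2 * (N - c) ≤ x := by
  induction c generalizing l with
  | zero =>
    simp only [chi] at h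
    split_ifs at h with h1
    · refine ⟨alt_lt 0 l (by omega) h hl, fun x hx => ?_⟩
      have := h1 x hx
      omega
    · exact absurd rfl h
  | succ c ih =>
    cases l with
    | nil => simp
    | cons a l =>
      simp only [chi] at h
      split_ifs at h with ha
      · obtain ⟨h1, h2⟩ := List.pairwise_cons.1 hl
        obtain ⟨h3, h4⟩ := ih (by omega) l h h2
        refine ⟨List.pairwise_cons.2 ⟨fun x hx => ?_, h3⟩, fun x hx => ?_⟩
        · have := h4 x hx
          omega
        · rcases List.mem_cons.1 hx with rfl | hx
          · omega
          · have := h4 x hx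
            omega
      · exact absurd rfl h

theorem psi_top (N D : ℕ) (l : List ℕ) (hg : Good l) (hD : ∀ x ∈ l, x / 2 < D)
    (hl : D < l.length) : psi N l = 0 := by
  by_contra hne
  have hp := List.perm_insertionSort (· ≤ ·) l
  have h1 := (chi_lt N N le_rfl _ hne (List.pairwise_insertionSort _ _)).1
  have h2 : l.Nodup := hp.nodup_iff.1 (h1.imp (fun h => ne_of_lt h))
  have h3 : (l.map (· / 2)).Nodup := h2.map_on (fun x hx y hy h => hg x hx y hy h)
  have h4 : (l.map (· / 2)).toFinset ⊆ Finset.range D := by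
    intro x hx
    simp only [List.mem_toFinset, List.mem_map] at hx
    obtain ⟨y, hy, rfl⟩ := hx
    simpa using hD y hy
  have h5 := Finset.card_le_card h4
  rw [List.toFinset_card_of_nodup h3] at h5
  simp at h5
  omega

end fan
section core

theorem sdr_zero {E : Type*} [NormedAddCommGroup E] [NormedSpace ℝ E] (r : ℕ) :
    sd^[r] (fun _ : List E => (0 : ZMod 2)) = fun _ => 0 := by
  have h := sdr_add r (fun _ : List E => (0 : ZMod 2)) (fun _ => 0)
  simp only [add_zero] at h
  funext l
  have := congrFun h l
  simp only [z2] at this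
  exact this

section beta
variable {E : Type*} [AddCommGroup E]

/-- sum of a cochain over the facets of the cross-polytope with vertices `± e i`, `i < k` -/
def beta (e : ℕ → E) : ℕ → (List E → ZMod 2) → ZMod 2
  | 0, φ => φ []
  | k + 1, φ => beta e k (fun l => φ (e k :: l)) + beta e k (fun l => φ (-e k :: l))

theorem beta_add (e : ℕ → E) (k : ℕ) (φ ψ : List E → ZMod 2) :
    beta e k (fun l => φ l + ψ l) = beta e k φ + beta e k ψ := by
  induction k generalizing φ ψ with
  | zero => rfl
  | succ k ih => simp only [beta, ih]; ring

theorem beta_cd (e : ℕ → E) (k : ℕ) (φ : List E → ZMod 2) : beta e k (cd φ) = 0 := by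
  induction k generalizing φ with
  | zero => simp [beta]
  | succ k ih => simp only [beta, cd_cons, beta_add, ih, add_zero, z2]

theorem beta_cd_cons (e : ℕ → E) (k : ℕ) (x : E) (φ : List E → ZMod 2) :
    beta e k (fun l => cd φ (x :: l)) = beta e k φ := by
  simp only [cd_cons, beta_add, beta_cd, add_zero]

theorem beta_map (e : ℕ → E) (T : E → E) (hT : ∀ x, T (-x) = - T x)
    (hTe : ∀ k, T (e k) = e k ∨ T (e k) = - e k) (k : ℕ) (φ : List E → ZMod 2) :
    beta e k (fun l => φ (l.map T)) = beta e k φ := by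
  induction k generalizing φ with
  | zero => rfl
  | succ k ih =>
    simp only [beta, List.map_cons]
    rw [ih (fun l => φ (T (e k) :: l)), ih (fun l => φ (T (-e k) :: l)), hT]
    rcases hTe k with h | h
    · rw [h]
    · rw [h, neg_neg, add_comm]

/-- `l` is an ordered facet with signs `ε` -/
def IsB (e : ℕ → E) (ε : ℕ → Bool) (k : ℕ) (l : List E) : Prop :=
  l.length = k ∧ ∀ x ∈ l, ∃ i < k, x = if ε i then e i else -e i

theorem IsB.cons {e : ℕ → E} {ε : ℕ → Bool} {k : ℕ} {l : List E} (h : IsB e ε k l) (b : Bool) :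
    IsB e (Function.update ε k b) (k + 1) ((if b then e k else -e k) :: l) := by
  refine ⟨by simp [h.1], fun x hx => ?_⟩
  rcases List.mem_cons.1 hx with rfl | hx
  · exact ⟨k, by omega, by simp⟩
  · obtain ⟨i, hi, hxi⟩ := h.2 x hx
    exact ⟨i, by omega, by rw [Function.update_of_ne (by omega)]; exact hxi⟩

theorem beta_congr (e : ℕ → E) (k : ℕ) (φ ψ : List E → ZMod 2)
    (h : ∀ ε l, IsB e ε k l → φ l = ψ l) : beta e k φ = beta e k ψ := by
  induction k generalizing φ ψ with
  | zero => exact h (fun _ => true) [] ⟨rfl, by simp⟩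
  | succ k ih =>
    simp only [beta]
    rw [ih _ (fun l => ψ (e k :: l)) fun ε l hl => h _ _ (by simpa using hl.cons true),
      ih _ (fun l => ψ (-e k :: l)) fun ε l hl => h _ _ (by simpa using hl.cons false)]

theorem beta_zero (e : ℕ → E) (k : ℕ) : beta e k (fun _ => 0) = 0 := by
  induction k with
  | zero => rfl
  | succ k ih => simp [beta, ih]

end beta

variable {m : ℕ}

def ee (m : ℕ) (k : ℕ) : Fin m → ℝ := fun i => if (i : ℕ) = k then 1 else 0

def tau (m N : ℕ) : (Fin m → ℝ) →ₗ[ℝ] (Fin m → ℝ) where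
  toFun p := fun i => if (i : ℕ) < N then p i else - p i
  map_add' p q := by
    funext i
    by_cases h : (i : ℕ) < N <;> simp [h]; ring
  map_smul' c p := by
    funext i
    by_cases h : (i : ℕ) < N <;> simp [h]

theorem tau_ee (m N k : ℕ) : tau m N (ee m k) = if k < N then ee m k else - ee m k := by
  funext i
  by_cases h : (i : ℕ) = k
  · subst h
    by_cases h2 : (i : ℕ) < N <;> simp [tau, ee, h2]
  · by_cases h2 : k < N <;> simp [tau, ee, h, h2]

def sg (b : Bool) : ℝ := if b then 1 else -1

def CC (m : ℕ) (ε : ℕ → Bool) (k : ℕ) : Set (Fin m → ℝ) :=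
  {p | (∀ j : Fin m, k ≤ j → p j = 0) ∧ (∀ j : Fin m, 0 ≤ sg (ε j) * p j) ∧
    ∑ j : Fin m, sg (ε j) * p j = 1}

theorem CC_convex (m : ℕ) (ε : ℕ → Bool) (k : ℕ) : Convex ℝ (CC m ε k) := by
  intro p hp q hq a b ha hb hab
  refine ⟨fun j hj => ?_, fun j => ?_, ?_⟩
  · simp [hp.1 j hj, hq.1 j hj]
  · have h1 := mul_nonneg ha (hp.2.1 j)
    have h2 := mul_nonneg hb (hq.2.1 j)
    simp only [Pi.add_apply, Pi.smul_apply, smul_eq_mul]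
    nlinarith
  · have : ∑ j : Fin m, sg (ε j) * (a • p + b • q) j
        = a * ∑ j : Fin m, sg (ε j) * p j + b * ∑ j : Fin m, sg (ε j) * q j := by
      rw [Finset.mul_sum, Finset.mul_sum, ← Finset.sum_add_distrib]
      refine Finset.sum_congr rfl fun j _ => ?_
      simp only [Pi.add_apply, Pi.smul_apply, smul_eq_mul]
      ring
    rw [this, hp.2.2, hq.2.2]
    linarith

theorem sg_mul (b : Bool) : sg b * sg b = 1 := by cases b <;> simp [sg]
theorem sg_abs (b : Bool) (x : ℝ) (h : 0 ≤ sg b * x) : sg b * x = |x| := by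
  cases b <;> simp [sg] at *
  · rw [abs_of_nonpos h]
  · rw [abs_of_nonneg h]

theorem IsB.mem_CC {ε : ℕ → Bool} {k : ℕ} (hk : k ≤ m) {l : List (Fin m → ℝ)}
    (h : IsB (ee m) ε k l) : ∀ x ∈ l, x ∈ CC m ε k := by
  intro x hx
  obtain ⟨i, hi, hxi⟩ := h.2 x hx
  have hx' : ∀ j : Fin m, x j = sg (ε i) * (if (j : ℕ) = i then 1 else 0) := by
    intro j
    rw [hxi]
    cases ε i <;> simp [sg, ee]
    split_ifs <;> simp
  refine ⟨fun j hj => ?_, fun j => ?_, ?_⟩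
  · rw [hx', if_neg (by omega), mul_zero]
  · rw [hx']
    split_ifs with hj
    · rw [hj, mul_one, sg_mul]; norm_num
    · simp
  · rw [Finset.sum_eq_single (⟨i, by omega⟩ : Fin m)]
    · rw [hx']; simp [sg_mul]
    · intro j _ hj
      rw [hx', if_neg, mul_zero, mul_zero]
      intro h; exact hj (Fin.ext h)
    · simp

def KK (m : ℕ) : Set (Fin m → ℝ) := {p | 1 ≤ (m : ℝ) * ‖p‖ ∧ ‖p‖ ≤ 1}

theorem CC_sub_KK (ε : ℕ → Bool) (k : ℕ) : CC m ε k ⊆ KK m := by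
  intro p hp
  have h1 : ∑ j : Fin m, |p j| = 1 := by
    rw [← hp.2.2]
    exact Finset.sum_congr rfl fun j _ => (sg_abs _ _ (hp.2.1 j)).symm
  constructor
  · rw [← h1]
    calc _ ≤ ∑ j : Fin m, ‖p‖ := Finset.sum_le_sum fun j _ => norm_le_pi_norm p j
      _ = _ := by simp
  · rw [pi_norm_le_iff_of_nonneg zero_le_one]
    intro j
    rw [← h1]
    exact Finset.single_le_sum (f := fun j => |p j|) (fun _ _ => abs_nonneg _) (Finset.mem_univ j)

theorem KK_ne_zero {p : Fin m → ℝ} (hp : p ∈ KK m) : p ≠ 0 := by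
  rintro rfl
  have := hp.1
  norm_num at this

theorem core_comb (N M n : ℕ) (hn : n = N + M + 1) (lab : (Fin n → ℝ) → ℕ)
    (L1 : ∀ p ≠ 0, lab p / 2 < N + M)
    (L2 : ∀ p ≠ 0, lab (tau _ N p) = flip N (lab p))
    (L3 : ∀ p ≠ 0, (∀ i : Fin n, N ≤ i → p i = 0) → ∀ i : Fin n,
      (lab p = 2 * i → 0 < p i) ∧ (lab p = 2 * i + 1 → p i < 0))
    (η : ℝ) (hη : 0 < η)
    (L4 : ∀ p ∈ KK n, ∀ q ∈ KK n, dist p q ≤ η →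
      lab p / 2 = lab q / 2 → lab p = lab q) : False := by
  obtain ⟨r, hr⟩ : ∃ r : ℕ, (1 - (n : ℝ)⁻¹) ^ r * 2 ≤ η := by
    have h0 : (0 : ℝ) < (n : ℝ)⁻¹ := by rw [hn]; push_cast; positivity
    have h1 : (n : ℝ)⁻¹ ≤ 1 := by
      apply inv_le_one_of_one_le₀
      rw [hn]; push_cast; linarith [Nat.cast_nonneg (α := ℝ) N, Nat.cast_nonneg (α := ℝ) M]
    obtain ⟨r, hr⟩ := exists_pow_lt_of_lt_one (half_pos hη) (by linarith : 1 - (n : ℝ)⁻¹ < 1)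
    exact ⟨r, by linarith⟩
  have loc : ∀ (k : ℕ) (hk : k ≤ n) (ε : ℕ → Bool) (l : List (Fin n → ℝ)) (hl : IsB (ee n) ε k l)
      (φ ψ : List (Fin n → ℝ) → ZMod 2)
      (h : ∀ l' : List (Fin n → ℝ), l'.length = k → (∀ x ∈ l', x ∈ CC n ε k) →
        Good (l'.map lab) → φ l' = ψ l'), sd^[r] φ l = sd^[r] ψ l := by
    intro k hk ε l hl φ ψ h
    have hlC := hl.mem_CC hk
    refine sdr_congr n r (CC_convex n ε k) (d := 2) (by rw [hl.1]; exact hk) hlC ?_ ?_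
    · intro x hx y hy
      have h1 := (CC_sub_KK ε k (hlC x hx)).2
      have h2 := (CC_sub_KK ε k (hlC y hy)).2
      rw [dist_eq_norm]
      linarith [norm_sub_le x y]
    · intro l' h1 h2 h3
      refine h l' (by rw [h1, hl.1]) h2 ?_
      intro a ha b hb hab
      obtain ⟨x, hx, rfl⟩ := List.mem_map.1 ha
      obtain ⟨y, hy, rfl⟩ := List.mem_map.1 hb
      exact L4 x (CC_sub_KK ε k (h2 x hx)) y (CC_sub_KK ε k (h2 y hy))
        ((h3 x hx y hy).trans hr) hab
  let Ψ : ℕ → List (Fin n → ℝ) → ZMod 2 := fun c => sd^[r] (fun l => psi c (l.map lab))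
  have hcd : ∀ c, cd (Ψ c) = sd^[r] (fun l => cd (psi c) (l.map lab)) := by
    intro c
    rw [← sdr_cd]
    congr 1
    funext l
    exact cd_map lab (psi c) l
  have stage1 : ∀ k ≤ N, beta (ee n) k (Ψ k) = 1 := by
    intro k
    induction k with
    | zero =>
      intro _
      simp [beta, Ψ, sdr_nil, psi, chi, alt]
    | succ k ih =>
      intro hk
      have hkn : k + 1 ≤ n := by omega
      rw [beta]
      have h1 : beta (ee n) k (fun l => Ψ (k + 1) (-ee n k :: l)) = 0 := by
        rw [← beta_zero (ee n) k]
        refine beta_congr _ _ _ _ fun ε l hl => ?_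
        have hl' := hl.cons false
        simp only [Bool.false_eq_true, if_false] at hl'
        rw [← congrFun (sdr_zero r) (-ee n k :: l)]
        refine loc (k + 1) hkn _ _ hl' _ _ fun l' h1 h2 h3 => ?_
        refine psi_eq_zero_of_notMem _ k (by omega) _ ?_
        intro hmem
        obtain ⟨x, hx, hxl⟩ := List.mem_map.1 hmem
        have hxC := h2 x hx
        have := (L3 x (KK_ne_zero (CC_sub_KK _ _ hxC)) (fun i hi => hxC.1 i (by omega))
          ⟨k, by omega⟩).1 hxl
        have h5 := hxC.2.1 ⟨k, by omega⟩
        simp [sg] at h5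
        linarith
      have h2 : beta (ee n) k (fun l => Ψ (k + 1) (ee n k :: l))
          = beta (ee n) k (fun l => cd (Ψ k) (ee n k :: l)) := by
        refine beta_congr _ _ _ _ fun ε l hl => ?_
        have hl' := hl.cons true
        simp only [if_true] at hl'
        rw [hcd]
        refine loc (k + 1) hkn _ _ hl' _ _ fun l' h1 h2 h3 => ?_
        refine (psi_step k _ h3 (by simpa using h1) ?_).symm
        intro c hc
        obtain ⟨x, hx, rfl⟩ := List.mem_map.1 hc
        have hxC := h2 x hx
        have hx0 := KK_ne_zero (CC_sub_KK _ _ hxC)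
        have hx3 := L3 x hx0 (fun i hi => hxC.1 i (by omega))
        constructor
        · by_contra hcon
          have hlt := L1 x hx0
          have h6 := hx3 ⟨lab x / 2, by omega⟩
          have h7 := hxC.1 ⟨lab x / 2, by omega⟩ (by simp; omega)
          simp only [h7, lt_irrefl] at h6
          rcases Nat.mod_two_eq_zero_or_one (lab x) with h | h
          · exact h6.1 (by omega)
          · exact h6.2 (by omega)
        · intro h
          have h6 := (hx3 ⟨k, by omega⟩).2 h
          have h5 := hxC.2.1 ⟨k, by omega⟩
          simp [sg] at h5
          linarith
      rw [h1, h2, add_zero, beta_cd_cons, ih (by omega)]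
  have htau : ∀ k, tau n N (ee n k) = ee n k ∨ tau n N (ee n k) = - ee n k := by
    intro k
    rw [tau_ee]
    split_ifs <;> simp
  have stage2 : ∀ j, N + j ≤ n → beta (ee n) (N + j) (Ψ N) = 1 := by
    intro j
    induction j with
    | zero => intro _; exact stage1 N le_rfl
    | succ j ih =>
      intro hj
      set k := N + j with hk
      have hkn : k + 1 ≤ n := by omega
      rw [show N + (j + 1) = k + 1 by omega, beta]
      have h1 : beta (ee n) k (fun l => Ψ N (-ee n k :: l))
          = beta (ee n) k (fun l => Ψ N ((ee n k :: l).map (tau n N))) := by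
        have := beta_map (ee n) (tau n N) (fun x => map_neg _ x) htau k
          (fun l => Ψ N (-ee n k :: l))
        rw [← this]
        simp only [List.map_cons, tau_ee]
        rw [if_neg (by omega)]
      rw [h1, ← beta_add]
      have h2 : beta (ee n) k (fun l => Ψ N (ee n k :: l) + Ψ N ((ee n k :: l).map (tau n N)))
          = beta (ee n) k (fun l => cd (Ψ N) (ee n k :: l)) := by
        refine beta_congr _ _ _ _ fun ε l hl => ?_
        have hl' := hl.cons true
        simp only [if_true] at hl'
        have h3 := congrFun (sdr_map (tau n N) r (fun l => psi N (l.map lab))) (ee n k :: l)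
        have h4 := congrFun (sdr_add r (fun l => psi N (l.map lab))
          (fun l => psi N ((l.map (tau n N)).map lab))) (ee n k :: l)
        simp only [Ψ]
        rw [← h3, ← h4]
        change _ = cd (Ψ N) _
        rw [hcd]
        refine loc (k + 1) hkn _ _ hl' _ _ fun l' h1 h2 h3 => ?_
        rw [cd_psi N _ h3]
        congr 2
        rw [List.map_map, List.map_map]
        refine List.map_congr_left fun x hx => ?_
        exact L2 x (KK_ne_zero (CC_sub_KK _ _ (h2 x hx)))
      rw [h2, beta_cd_cons, ih (by omega)]
  have hfin := stage2 (M + 1) (by omega)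
  have hzero : beta (ee n) (N + (M + 1)) (Ψ N) = 0 := by
    rw [← beta_zero (ee n) (N + (M + 1))]
    refine beta_congr _ _ _ _ fun ε l hl => ?_
    rw [← congrFun (sdr_zero r) l]
    refine loc _ (by omega) _ _ hl _ _ fun l' h1 h2 h3 => ?_
    refine psi_top N (N + M) _ h3 ?_ (by simp [h1])
    intro c hc
    obtain ⟨x, hx, rfl⟩ := List.mem_map.1 hc
    exact L1 x (KK_ne_zero (CC_sub_KK _ _ (h2 x hx)))
  rw [hzero] at hfin
  exact zero_ne_one hfin

theorem core (N M : ℕ) (F : (Fin (N + M + 1) → ℝ) → Fin (N + M) → ℝ)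
    (hF : ContinuousOn F {0}ᶜ) (hne : ∀ p ≠ 0, F p ≠ 0)
    (hτ : ∀ p ≠ 0, F (tau _ N p) = tau _ N (F p))
    (hfix : ∀ p ≠ 0, (∀ i : Fin (N + M + 1), N ≤ i → p i = 0) →
      ∃ c > 0, ∀ i : Fin (N + M), F p i = c * p i.castSucc) : False := by
  have hpos : 0 < N + M := by
    by_contra h
    have h1 : (fun _ => 1 : Fin (N + M + 1) → ℝ) ≠ 0 := by
      intro h
      have := congrFun h 0
      simp at this
    apply hne _ h1
    funext i
    exact absurd i.2 (by omega)
  have : Nonempty (Fin (N + M)) := ⟨⟨0, hpos⟩⟩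
  have hex : ∀ a : Fin (N + M) → ℝ, ∃ i, ∀ j, a j ≤ a i := fun a => Finite.exists_max a
  choose am ham using hex
  let ix : (Fin (N + M + 1) → ℝ) → Fin (N + M) := fun p => am (fun i => |F p i|)
  have hix : ∀ p j, |F p j| ≤ |F p (ix p)| := fun p => ham (fun i => |F p i|)
  have hnorm : ∀ p, |F p (ix p)| = ‖F p‖ := by
    intro p
    apply le_antisymm
    · exact norm_le_pi_norm (F p) (ix p)
    · rw [pi_norm_le_iff_of_nonneg (abs_nonneg _)]
      exact hix p
  have hix0 : ∀ p ≠ 0, F p (ix p) ≠ 0 := by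
    intro p hp h
    have := hnorm p
    rw [h, abs_zero] at this
    exact hne p hp (norm_eq_zero.1 this.symm)
  classical
  let lab : (Fin (N + M + 1) → ℝ) → ℕ := fun p => 2 * (ix p : ℕ) + if 0 < F p (ix p) then 0 else 1
  have hlab2 : ∀ p, lab p / 2 = ix p := by
    intro p
    simp only [lab]
    split_ifs <;> omega
  -- compactness
  have hKc : IsCompact (KK (N + M + 1)) := by
    apply Metric.isCompact_of_isClosed_isBounded
    · exact (isClosed_le continuous_const (continuous_const.mul continuous_norm)).inter
        (isClosed_le continuous_norm continuous_const)
    · refine (Metric.isBounded_closedBall (x := (0 : Fin (N + M + 1) → ℝ)) (r := 1)).subset ?_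
      intro p hp
      simpa using hp.2
  have hKs : KK (N + M + 1) ⊆ {0}ᶜ := fun p hp => KK_ne_zero hp
  have hFK := hF.mono hKs
  obtain ⟨δ, hδ, hδF⟩ : ∃ δ > 0, ∀ p ∈ KK (N + M + 1), δ ≤ ‖F p‖ := by
    rcases (KK (N + M + 1)).eq_empty_or_nonempty with h | h
    · exact ⟨1, one_pos, by simp [h]⟩
    · obtain ⟨p, hp, hmin⟩ := hKc.exists_isMinOn h hFK.norm
      exact ⟨‖F p‖, norm_pos_iff.2 (hne p (KK_ne_zero hp)), fun q hq => hmin hq⟩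
  have huc := hKc.uniformContinuousOn_of_continuous hFK
  obtain ⟨η, hη, hηF⟩ := Metric.uniformContinuousOn_iff.1 huc δ hδ
  refine core_comb N M _ rfl lab ?_ ?_ ?_ (η / 2) (half_pos hη) ?_
  · intro p _
    rw [hlab2]
    exact (ix p).2
  · intro p hp
    have h1 : ix (tau _ N p) = ix p := by
      simp only [ix]
      rw [hτ p hp]
      congr 1
      funext i
      by_cases h : (i : ℕ) < N <;> simp [tau, h]
    have h0 := hix0 p hp
    have h2 : F (tau _ N p) (ix p) = if (ix p : ℕ) < N then F p (ix p) else - F p (ix p) := by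
      rw [hτ p hp]; rfl
    unfold flip
    rw [hlab2]
    simp only [lab, h1, h2]
    by_cases h : (ix p : ℕ) < N
    · simp [h]
    · simp only [h, if_false]
      rcases lt_or_gt_of_ne h0 with h3 | h3
      · have h4 : ¬ 0 < F p (ix p) := by linarith
        have h5 : 0 < - F p (ix p) := by linarith
        simp only [h4, h5, if_true, if_false]
        rw [if_neg (by omega)]; omega
      · have h5 : ¬ 0 < - F p (ix p) := by linarith
        simp only [h3, h5, if_true, if_false]
        rw [if_pos (by omega)]
  · intro p hp hp0 i
    obtain ⟨c, hc, hcF⟩ := hfix p hp hp0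
    have h0 := hix0 p hp
    have h1 := hcF (ix p)
    constructor
    · intro hl
      have h2 : (i : ℕ) = ix p := by rw [← hlab2, hl]; omega
      have h3 : i = (ix p).castSucc := Fin.ext h2
      have h4 : 0 < F p (ix p) := by
        by_contra h4
        simp only [lab, h4, if_false] at hl
        omega
      rw [h3]
      rw [h1] at h4
      exact (mul_pos_iff_of_pos_left hc).1 h4
    · intro hl
      have h2 : (i : ℕ) = ix p := by rw [← hlab2, hl]; omega
      have h3 : i = (ix p).castSucc := Fin.ext h2
      have h4 : F p (ix p) < 0 := by
        refine lt_of_le_of_ne ?_ h0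
        by_contra h4
        push Not at h4
        simp only [lab, h4, if_true] at hl
        omega
      rw [h3]
      rw [h1] at h4
      by_contra h5
      push Not at h5
      have := mul_nonneg hc.le h5
      linarith
  · intro p hp q hq hpq hl
    rw [hlab2, hlab2] at hl
    have hl' : ix p = ix q := Fin.ext hl
    have hd := hηF p hp q hq (by linarith)
    have hd2 : |F p (ix p) - F q (ix p)| < δ := by
      refine lt_of_le_of_lt ?_ hd
      rw [dist_eq_norm]
      exact norm_le_pi_norm (F p - F q) (ix p)
    have h1 := hδF p hp
    have h2 := hδF q hq
    rw [← hnorm] at h1 h2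
    rw [← hl'] at h2
    rw [abs_lt] at hd2
    simp only [lab, ← hl']
    congr 1
    by_cases h3 : 0 < F p (ix p) <;> by_cases h4 : 0 < F q (ix p) <;>
      simp only [h3, h4, if_true, if_false]
    · exfalso
      rw [abs_of_pos h3] at h1
      rw [abs_of_nonpos (not_lt.1 h4)] at h2
      linarith
    · exfalso
      rw [abs_of_nonpos (not_lt.1 h3)] at h1
      rw [abs_of_pos h4] at h2
      linarith

end core
end BU

namespace BU
section sphere
variable {V : Type*} [NormedAddCommGroup V] [NormedSpace ℝ V]

noncomputable def Qm : OnePoint V → ℝ × V := fun x =>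
  Option.elim x (1, 0) (fun y => ((‖y‖ ^ 2 - 1) / (‖y‖ ^ 2 + 1), (2 / (‖y‖ ^ 2 + 1)) • y))

theorem Qm_infty : Qm (∞ : OnePoint V) = (1, 0) := rfl
theorem Qm_coe (y : V) : Qm (y : OnePoint V) =
    ((‖y‖ ^ 2 - 1) / (‖y‖ ^ 2 + 1), (2 / (‖y‖ ^ 2 + 1)) • y) := rfl

theorem Qm_ne_zero (x : OnePoint V) : Qm x ≠ 0 := by
  induction x using OnePoint.rec with
  | infty => simp [Qm_infty]
  | coe y =>
    rw [Qm_coe]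
    intro h
    have h0 : (0 : ℝ) < ‖y‖ ^ 2 + 1 := by positivity
    have h2 := congrArg Prod.snd h
    have h1 := congrArg Prod.fst h
    simp only [Prod.fst_zero, Prod.snd_zero] at h1 h2
    have hy : y = 0 := by
      rcases smul_eq_zero.1 h2 with h | h
      · have : (2 : ℝ) / (‖y‖ ^ 2 + 1) ≠ 0 := by positivity
        exact absurd h this
      · exact h
    subst hy
    norm_num at h1

theorem Qm_injective : Function.Injective (Qm : OnePoint V → ℝ × V) := by
  have key : ∀ y : V, (‖y‖ ^ 2 - 1) / (‖y‖ ^ 2 + 1) ≠ 1 := by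
    intro y h
    have h0 : (0 : ℝ) < ‖y‖ ^ 2 + 1 := by positivity
    rw [div_eq_one_iff_eq h0.ne'] at h
    linarith
  intro x x' h
  induction x using OnePoint.rec with
  | infty =>
    induction x' using OnePoint.rec with
    | infty => rfl
    | coe y => exact absurd (congrArg Prod.fst h).symm (key y)
  | coe y =>
    induction x' using OnePoint.rec with
    | infty => exact absurd (congrArg Prod.fst h) (key y)
    | coe y' =>
      have h0 : (0 : ℝ) < ‖y‖ ^ 2 + 1 := by positivity
      have h0' : (0 : ℝ) < ‖y'‖ ^ 2 + 1 := by positivity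
      have h1 := congrArg Prod.fst h
      have h2 := congrArg Prod.snd h
      simp only [Qm_coe] at h1 h2
      rw [div_eq_div_iff h0.ne' h0'.ne'] at h1
      have h3 : ‖y‖ ^ 2 = ‖y'‖ ^ 2 := by linarith
      rw [h3] at h2
      have : (2 : ℝ) / (‖y'‖ ^ 2 + 1) ≠ 0 := by positivity
      rw [smul_right_injective V this h2]

theorem Qm_continuous [FiniteDimensional ℝ V] : Continuous (Qm : OnePoint V → ℝ × V) := by
  have : ProperSpace V := FiniteDimensional.proper_real V
  rw [OnePoint.continuous_iff]
  constructor
  · rw [Filter.coclosedCompact_eq_cocompact]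
    have hn : Filter.Tendsto (fun y : V => ‖y‖) (Filter.cocompact V) Filter.atTop :=
      tendsto_norm_cocompact_atTop
    have hn2 : Filter.Tendsto (fun y : V => ‖y‖ ^ 2 + 1) (Filter.cocompact V) Filter.atTop :=
      Filter.tendsto_atTop_add_const_right _ _ ((Filter.tendsto_pow_atTop two_ne_zero).comp hn)
    have hi := hn2.inv_tendsto_atTop
    rw [Qm_infty]
    refine Filter.Tendsto.prodMk_nhds ?_ ?_
    · have h1 : Filter.Tendsto (fun y : V => 1 - 2 * (‖y‖ ^ 2 + 1)⁻¹) (Filter.cocompact V)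
          (nhds (1 - 2 * 0)) := tendsto_const_nhds.sub (hi.const_mul 2)
      simp only [mul_zero, sub_zero] at h1
      refine h1.congr fun y => ?_
      have h0 : (0 : ℝ) < ‖y‖ ^ 2 + 1 := by positivity
      field_simp
      ring
    · have h1 : Filter.Tendsto (fun y : V => 2 * (‖y‖)⁻¹) (Filter.cocompact V)
          (nhds (2 * 0)) := (hn.inv_tendsto_atTop).const_mul 2
      simp only [mul_zero] at h1
      refine squeeze_zero_norm (fun y => ?_) h1
      change ‖(2 / (‖y‖ ^ 2 + 1)) • y‖ ≤ _
      have h0 : (0 : ℝ) < ‖y‖ ^ 2 + 1 := by positivity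
      rw [norm_smul, Real.norm_of_nonneg (by positivity)]
      rcases eq_or_ne y 0 with rfl | hy
      · simp
      · have : 0 < ‖y‖ := norm_pos_iff.2 hy
        field_simp
        linarith
  · change Continuous fun y : V => ((‖y‖ ^ 2 - 1) / (‖y‖ ^ 2 + 1), (2 / (‖y‖ ^ 2 + 1)) • y)
    have h0 : ∀ y : V, ‖y‖ ^ 2 + 1 ≠ 0 := fun y => by positivity
    fun_prop (disch := assumption)

noncomputable def rr (q : ℝ × V) : ℝ := Real.sqrt (q.1 ^ 2 + ‖q.2‖ ^ 2)

theorem rr_pos {q : ℝ × V} (hq : q ≠ 0) : 0 < rr q := by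
  apply Real.sqrt_pos.2
  by_cases h : q.1 = 0
  · have : q.2 ≠ 0 := fun h2 => hq (Prod.ext h h2)
    have := norm_pos_iff.2 this
    positivity
  · positivity

theorem rr_sq (q : ℝ × V) : rr q ^ 2 = q.1 ^ 2 + ‖q.2‖ ^ 2 := Real.sq_sqrt (by positivity)

open Classical in
noncomputable def Pm (q : ℝ × V) : OnePoint V :=
  if q.1 < rr q then (((rr q - q.1)⁻¹ • q.2 : V) : OnePoint V) else ∞

theorem Qm_Pm {q : ℝ × V} (hq : q ≠ 0) : Qm (Pm q) = (rr q)⁻¹ • q := by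
  have hr := rr_pos hq
  have hs := rr_sq q
  unfold Pm
  split_ifs with h
  · rw [Qm_coe, norm_smul]
    have h1 : 0 < rr q - q.1 := by linarith
    rw [Real.norm_of_nonneg (by positivity : 0 ≤ (rr q - q.1)⁻¹), mul_pow]
    have h2 : ‖q.2‖ ^ 2 = (rr q - q.1) * (rr q + q.1) := by linarith [hs]
    have h3 : ((rr q - q.1)⁻¹) ^ 2 * ‖q.2‖ ^ 2 = (rr q + q.1) / (rr q - q.1) := by
      rw [h2]; field_simp
    rw [h3]
    have h4 : (rr q + q.1) / (rr q - q.1) + 1 = 2 * rr q / (rr q - q.1) := by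
      field_simp; ring
    rw [h4]
    apply Prod.ext
    · simp only [Prod.smul_fst, smul_eq_mul]
      field_simp; ring
    · simp only [Prod.smul_snd, smul_smul]
      congr 1
      field_simp
  · push Not at h
    have h1 : ‖q.2‖ ^ 2 ≤ 0 := by nlinarith
    have h2 : q.2 = 0 := by
      have : ‖q.2‖ ^ 2 = 0 := le_antisymm h1 (by positivity)
      exact norm_eq_zero.1 (pow_eq_zero_iff two_ne_zero |>.1 this)
    have h3 : rr q = q.1 := by
      rw [h2] at hs
      simp only [norm_zero, ne_eq, OfNat.ofNat_ne_zero, not_false_eq_true, zero_pow, add_zero] at hs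
      nlinarith
    rw [Qm_infty]
    apply Prod.ext
    · rw [Prod.smul_fst, h3, smul_eq_mul, inv_mul_cancel₀ (by rw [← h3]; exact hr.ne')]
    · rw [Prod.smul_snd, h2, smul_zero]

theorem Pm_continuousOn [FiniteDimensional ℝ V] : ContinuousOn (Pm : ℝ × V → OnePoint V) {0}ᶜ := by
  have : ProperSpace V := FiniteDimensional.proper_real V
  have hemb := (Qm_continuous (V := V)).isClosedEmbedding Qm_injective
  rw [hemb.isInducing.continuousOn_iff]
  have h1 : ContinuousOn (fun q : ℝ × V => (rr q)⁻¹ • q) {0}ᶜ := by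
    have hc : Continuous (rr : ℝ × V → ℝ) := by unfold rr; fun_prop
    exact (hc.continuousOn.inv₀ fun q hq => (rr_pos hq).ne').smul continuousOn_id
  exact h1.congr fun q hq => Qm_Pm hq

theorem Qm_map' {W : Type*} [NormedAddCommGroup W] [NormedSpace ℝ W] (L : V →ₗ[ℝ] W)
    (hL : ∀ v, ‖L v‖ = ‖v‖) (x : OnePoint V) :
    Qm (OnePoint.map' (fun v => L v) x) = ((Qm x).1, L (Qm x).2) := by
  induction x using OnePoint.rec with
  | infty => change ((1 : ℝ), (0 : W)) = (1, L 0); simp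
  | coe y =>
    change Qm ((L y : W) : OnePoint W) = _
    rw [Qm_coe, Qm_coe, hL]; simp

theorem Pm_map' {W : Type*} [NormedAddCommGroup W] [NormedSpace ℝ W] (L : V →ₗ[ℝ] W)
    (hL : ∀ v, ‖L v‖ = ‖v‖) (q : ℝ × V) :
    Pm (q.1, L q.2) = OnePoint.map' (fun v => L v) (Pm q) := by
  have h : rr (q.1, L q.2) = rr q := by simp [rr, hL]
  unfold Pm
  rw [h]
  split_ifs with h1
  · change _ = ((L _ : W) : OnePoint W)
    simp
  · rfl

end sphere
section final
variable {A V W : Type*} [NormedAddCommGroup A] [NormedSpace ℝ A] [FiniteDimensional ℝ A]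
  [NormedAddCommGroup V] [NormedSpace ℝ V] [FiniteDimensional ℝ V]
  [NormedAddCommGroup W] [NormedSpace ℝ W] [FiniteDimensional ℝ W]

theorem exists_map (f : OnePoint (A × V) → OnePoint (A × W)) (hf : Continuous f)
    (hequiv : ∀ p, f (OnePoint.map' (fun q => (q.1, -q.2)) p) =
      OnePoint.map' (fun q => (q.1, -q.2)) (f p))
    (g : OnePoint A → OnePoint A) (hg : Continuous g)
    (hrestrict : ∀ p, f (OnePoint.map' (fun x => (x, 0)) p) = OnePoint.map' (fun x => (x, 0)) (g p))
    (hdeg : ContinuousMap.Homotopic ⟨g, hg⟩ (ContinuousMap.id _)) :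
    ∃ G : (ℝ × A) × V → (ℝ × A) × W, ContinuousOn G {0}ᶜ ∧ (∀ p ≠ 0, G p ≠ 0) ∧
      (∀ p, G (p.1, -p.2) = ((G p).1, -(G p).2)) ∧
      (∀ x : ℝ × A, x ≠ 0 → ∃ c : ℝ, 0 < c ∧ G (x, 0) = (c • x, 0)) := by
  classical
  obtain ⟨H⟩ := hdeg
  let B1 : (ℝ × A) × V → (ℝ × A) × W := fun p =>
    let q := Qm (f (Pm (p.1.1, (p.1.2, (‖p.2‖ - ‖p.1‖) • p.2))))
    ((q.1, q.2.1), q.2.2)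
  let B2 : (ℝ × A) × V → (ℝ × A) × W := fun p =>
    (Qm (H (Set.projIcc (0 : ℝ) 1 zero_le_one (1 - ‖p.2‖ / ‖p.1‖), Pm p.1)), 0)
  let iV : A →ₗ[ℝ] A × V := LinearMap.inl ℝ A V
  let iW : A →ₗ[ℝ] A × W := LinearMap.inl ℝ A W
  have hiV : ∀ v, ‖iV v‖ = ‖v‖ := fun v => by simp [iV]
  have hiW : ∀ v, ‖iW v‖ = ‖v‖ := fun v => by simp [iW]
  let nV : A × V →ₗ[ℝ] A × V := LinearMap.prodMap LinearMap.id (-LinearMap.id)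
  let nW : A × W →ₗ[ℝ] A × W := LinearMap.prodMap LinearMap.id (-LinearMap.id)
  have hnV : ∀ v, ‖nV v‖ = ‖v‖ := fun v => by simp [nV, Prod.norm_def]
  have hnW : ∀ v, ‖nW v‖ = ‖v‖ := fun v => by simp [nW, Prod.norm_def]
  have hB1 : ContinuousOn B1 {0}ᶜ := by
    have h1 : ContinuousOn (fun p : (ℝ × A) × V =>
        Pm (p.1.1, (p.1.2, (‖p.2‖ - ‖p.1‖) • p.2))) {0}ᶜ := by
      refine Pm_continuousOn.comp (t := {0}ᶜ) (Continuous.continuousOn (by fun_prop)) ?_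
      intro p hp h
      apply hp
      have h' : (p.1.1, (p.1.2, (‖p.2‖ - ‖p.1‖) • p.2)) = (0 : ℝ × A × V) := h
      simp only [Prod.ext_iff, Prod.fst_zero, Prod.snd_zero] at h'
      obtain ⟨a, b, c⟩ := h'
      have hx : p.1 = 0 := Prod.ext a b
      rw [hx, norm_zero, sub_zero] at c
      have : p.2 = 0 := by
        rcases smul_eq_zero.1 c with c | c
        · exact norm_eq_zero.1 c
        · exact c
      exact Prod.ext hx this
    have h2 := (Qm_continuous.comp hf).comp_continuousOn h1
    have h3 : Continuous fun q : ℝ × A × W => (((q.1, q.2.1), q.2.2) : (ℝ × A) × W) := by fun_prop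
    exact h3.comp_continuousOn h2
  have hB2 : ContinuousOn B2 {p | p.1 ≠ 0} := by
    have h1 : ContinuousOn (fun p : (ℝ × A) × V => Pm p.1) {p | p.1 ≠ 0} :=
      Pm_continuousOn.comp (t := {0}ᶜ) continuous_fst.continuousOn fun p hp => hp
    have h2 : ContinuousOn (fun p : (ℝ × A) × V => 1 - ‖p.2‖ / ‖p.1‖) {p | p.1 ≠ 0} := by
      refine continuousOn_const.sub (ContinuousOn.div (Continuous.continuousOn (by fun_prop))
        (Continuous.continuousOn (by fun_prop)) fun p hp => norm_ne_zero_iff.2 hp)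
    have h3 := (continuous_projIcc (h := zero_le_one (α := ℝ))).comp_continuousOn h2
    have h4 := (Qm_continuous.comp H.continuous).comp_continuousOn (h3.prodMk h1)
    exact h4.prodMk continuousOn_const
  have hagree : ∀ p : (ℝ × A) × V, p.1 ≠ 0 → ‖p.1‖ = ‖p.2‖ → B1 p = B2 p := by
    intro p hp h
    have h1 : (p.1.1, (p.1.2, (‖p.2‖ - ‖p.1‖) • p.2)) = (p.1.1, iV p.1.2) := by
      simp [iV, h]
    have h2 : (1 : ℝ) - ‖p.2‖ / ‖p.1‖ = 0 := by
      rw [← h, div_self (norm_ne_zero_iff.2 hp), sub_self]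
    simp only [B1, B2]
    rw [h1, Pm_map' iV hiV p.1, h2]
    have h3 : f (OnePoint.map' (fun v => iV v) (Pm p.1)) =
        OnePoint.map' (fun v => iW v) (g (Pm p.1)) := hrestrict _
    have h4 : H (Set.projIcc (0 : ℝ) 1 zero_le_one 0, Pm p.1) = g (Pm p.1) := by
      rw [Set.projIcc_left]
      exact H.apply_zero _
    rw [h3, h4, Qm_map' iW hiW]
    simp [iW]
  refine ⟨fun p => if ‖p.1‖ ≤ ‖p.2‖ then B1 p else B2 p, ?_, ?_, ?_, ?_⟩
  · rw [continuousOn_iff_continuous_restrict]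
    have hne : ∀ p : (({0}ᶜ : Set ((ℝ × A) × V))), ‖p.1.2‖ ≤ ‖p.1.1‖ → p.1.1 ≠ 0 := by
      intro p hp h
      apply p.2
      have : p.1.2 = 0 := by
        rw [h, norm_zero] at hp
        exact norm_le_zero_iff.1 hp
      exact Prod.ext h this
    refine continuous_if_le (f' := fun p : (({0}ᶜ : Set ((ℝ × A) × V))) => B1 p)
      (g' := fun p : (({0}ᶜ : Set ((ℝ × A) × V))) => B2 p)
      (f := fun p : (({0}ᶜ : Set ((ℝ × A) × V))) => ‖p.1.1‖)
      (g := fun p : (({0}ᶜ : Set ((ℝ × A) × V))) => ‖p.1.2‖)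
      (by fun_prop) (by fun_prop) ?_ ?_ ?_
    · exact (continuousOn_iff_continuous_restrict.1 hB1).continuousOn
    · exact hB2.comp continuous_subtype_val.continuousOn fun p hp => hne p hp
    · intro p hp
      exact hagree p.1 (hne p hp.ge) hp
  · intro p hp
    dsimp only
    split_ifs with h
    · intro h0
      simp only [B1] at h0
      apply Qm_ne_zero (f (Pm (p.1.1, (p.1.2, (‖p.2‖ - ‖p.1‖) • p.2))))
      simp only [Prod.ext_iff, Prod.fst_zero, Prod.snd_zero] at h0
      exact Prod.ext h0.1.1 (Prod.ext h0.1.2 h0.2)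
    · intro h0
      exact Qm_ne_zero _ (congrArg Prod.fst h0)
  · intro p
    dsimp only
    rw [norm_neg]
    split_ifs with h
    · simp only [B1, norm_neg, smul_neg]
      have h1 := Pm_map' nV hnV (p.1.1, (p.1.2, (‖p.2‖ - ‖p.1‖) • p.2))
      have h2 : ∀ q, f (OnePoint.map' (fun v => nV v) q) = OnePoint.map' (fun v => nW v) (f q) :=
        fun q => hequiv q
      have h3 : nV (p.1.2, (‖p.2‖ - ‖p.1‖) • p.2) = (p.1.2, -((‖p.2‖ - ‖p.1‖) • p.2)) := by
        simp [nV]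
      simp only [h3] at h1
      rw [h1, h2, Qm_map' nW hnW]
      simp [nW]
    · simp [B2]
  · intro x hx
    refine ⟨(rr x)⁻¹, inv_pos.2 (rr_pos hx), ?_⟩
    dsimp only
    have h0 : ¬ ‖x‖ ≤ ‖(0 : V)‖ := by
      rw [norm_zero, not_le]
      exact norm_pos_iff.2 hx
    rw [if_neg h0]
    simp only [B2, norm_zero, zero_div, sub_zero]
    have h4 : H (Set.projIcc (0 : ℝ) 1 zero_le_one 1, Pm x) = Pm x := by
      rw [Set.projIcc_right]
      exact H.apply_one _
    rw [h4, Qm_Pm hx]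

theorem general (hVW : Module.finrank ℝ W < Module.finrank ℝ V)
    (f : OnePoint (A × V) → OnePoint (A × W)) (hf : Continuous f)
    (hequiv : ∀ p, f (OnePoint.map' (fun q => (q.1, -q.2)) p) =
      OnePoint.map' (fun q => (q.1, -q.2)) (f p))
    (g : OnePoint A → OnePoint A) (hg : Continuous g)
    (hrestrict : ∀ p, f (OnePoint.map' (fun x => (x, 0)) p) = OnePoint.map' (fun x => (x, 0)) (g p))
    (hdeg : ContinuousMap.Homotopic ⟨g, hg⟩ (ContinuousMap.id _)) : False := by
  obtain ⟨G, hG, hG0, hGτ, hGfix⟩ := exists_map f hf hequiv g hg hrestrict hdeg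
  set N := Module.finrank ℝ (ℝ × A) with hN
  set M := Module.finrank ℝ W with hM
  let eX : (ℝ × A) ≃ₗ[ℝ] (Fin N → ℝ) := LinearEquiv.ofFinrankEq _ _ (by simp [hN])
  let eW : W ≃ₗ[ℝ] (Fin M → ℝ) := LinearEquiv.ofFinrankEq _ _ (by simp [hM])
  let eV : V ≃ₗ[ℝ] (Fin (Module.finrank ℝ V) → ℝ) := LinearEquiv.ofFinrankEq _ _ (by simp)
  let J0 : (Fin (M + 1) → ℝ) →ₗ[ℝ] (Fin (Module.finrank ℝ V) → ℝ) :=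
    { toFun := fun p i => if h : (i : ℕ) < M + 1 then p ⟨i, h⟩ else 0
      map_add' := fun p q => by funext i; simp only [Pi.add_apply]; split_ifs <;> simp
      map_smul' := fun c p => by
        funext i; simp only [Pi.smul_apply, RingHom.id_apply]; split_ifs <;> simp }
  let J : (Fin (M + 1) → ℝ) →ₗ[ℝ] V := eV.symm.toLinearMap ∘ₗ J0
  have hJ0 : ∀ p, J0 p = 0 → p = 0 := by
    intro p hp
    funext i
    have h2 : (if h : (i : ℕ) < M + 1 then p ⟨i, h⟩ else 0) = 0 :=
      congrFun hp ⟨i, by omega⟩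
    rw [dif_pos i.2] at h2
    exact h2
  have hJ : ∀ p, J p = 0 → p = 0 := by
    intro p hp
    apply hJ0
    have : eV.symm (J0 p) = 0 := hp
    simpa using this
  let inX : (Fin (N + M + 1) → ℝ) →ₗ[ℝ] (Fin N → ℝ) :=
    LinearMap.funLeft ℝ ℝ (fun i : Fin N => (⟨i, by omega⟩ : Fin (N + M + 1)))
  let inV : (Fin (N + M + 1) → ℝ) →ₗ[ℝ] (Fin (M + 1) → ℝ) :=
    LinearMap.funLeft ℝ ℝ (fun i : Fin (M + 1) => (⟨N + i, by omega⟩ : Fin (N + M + 1)))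
  let inp : (Fin (N + M + 1) → ℝ) →ₗ[ℝ] (ℝ × A) × V :=
    LinearMap.prod (eX.symm.toLinearMap ∘ₗ inX) (J ∘ₗ inV)
  have hinp : ∀ p, inp p = (eX.symm (inX p), J (inV p)) := fun p => rfl
  have hinp0 : ∀ p ≠ 0, inp p ≠ 0 := by
    intro p hp h
    rw [hinp] at h
    have h1 : eX.symm (inX p) = 0 := congrArg Prod.fst h
    have h2 : J (inV p) = 0 := congrArg Prod.snd h
    have h1' : inX p = 0 := by simpa using h1
    have h2' := hJ _ h2
    apply hp
    funext i
    by_cases hi : (i : ℕ) < N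
    · exact congrFun h1' ⟨i, hi⟩
    · have := congrFun h2' ⟨i - N, by omega⟩
      simp only [inV, LinearMap.funLeft_apply, Pi.zero_apply] at this
      refine Eq.trans ?_ this
      congr 1
      apply Fin.ext
      simp; omega
  have hinpτ : ∀ p, inp (tau _ N p) = ((inp p).1, -(inp p).2) := by
    intro p
    rw [hinp, hinp]
    have h1 : inX (tau _ N p) = inX p := by
      funext i
      simp [inX, tau, LinearMap.funLeft_apply]
    have h2 : inV (tau _ N p) = - inV p := by
      funext i
      simp [inV, tau, LinearMap.funLeft_apply]
    rw [h1, h2, map_neg]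
  let out : (ℝ × A) × W → Fin (N + M) → ℝ := fun q i =>
    if h : (i : ℕ) < N then eX q.1 ⟨i, h⟩ else eW q.2 ⟨i - N, by omega⟩
  have hout : Continuous out := by
    have c1 : Continuous eX := eX.toLinearMap.continuous_of_finiteDimensional
    have c2 : Continuous eW := eW.toLinearMap.continuous_of_finiteDimensional
    refine continuous_pi fun i => ?_
    by_cases h : (i : ℕ) < N
    · simp only [out, h, dif_pos]; fun_prop
    · simp only [out, h, dif_neg, not_false_eq_true]; fun_prop
  have hcinp : Continuous inp := inp.continuous_of_finiteDimensional
  refine core N M (fun p => out (G (inp p))) ?_ ?_ ?_ ?_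
  · exact hout.comp_continuousOn (hG.comp hcinp.continuousOn fun p hp => hinp0 p hp)
  · intro p hp h
    apply hG0 _ (hinp0 p hp)
    apply Prod.ext
    · apply eX.injective
      rw [Prod.fst_zero, map_zero]
      funext i
      have := congrFun h ⟨i, by omega⟩
      simpa [out] using this
    · apply eW.injective
      rw [Prod.snd_zero, map_zero]
      funext i
      have := congrFun h ⟨N + i, by omega⟩
      simpa [out] using this
  · intro p hp
    rw [hinpτ, hGτ]
    funext i
    by_cases h : (i : ℕ) < N <;> simp [out, tau, h]
  · intro p hp hp0
    have h2 : inV p = 0 := by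
      funext i
      exact hp0 _ (by simp)
    have h1 : eX.symm (inX p) ≠ 0 := by
      intro h
      apply hinp0 p hp
      rw [hinp, h2, h, map_zero]; rfl
    obtain ⟨c, hc, hGc⟩ := hGfix _ h1
    refine ⟨c, hc, fun i => ?_⟩
    rw [hinp, h2, map_zero, hGc]
    by_cases h : (i : ℕ) < N
    · have h3 : eX (c • eX.symm (inX p)) = c • inX p := by
        have h4 := eX.map_smul c (eX.symm (inX p))
        have h5 := eX.apply_symm_apply (inX p)
        exact h4.trans (congrArg (fun v => c • v) h5)
      simp only [out, h, dif_pos]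
      exact congrFun h3 ⟨i, h⟩
    · simp only [out, h, dif_neg, not_false_eq_true, map_zero]
      rw [hp0 i.castSucc (by simp; omega)]
      simp

end final
end BU

/-- Let `T = U(1)` act on `ℝⁿ ⊕ ℂᵐ` trivially on `ℝⁿ` and by scalar
multiplication on `ℂᵐ`, and similarly on `ℝⁿ ⊕ ℂ^m'`.  If a continuous
equivariant map `f : (ℝⁿ ⊕ ℂᵐ)⁺ → (ℝⁿ ⊕ ℂ^m')⁺` restricts on the fixed-point
spheres to a map `g : (ℝⁿ)⁺ → (ℝⁿ)⁺` of degree one (i.e. homotopic to the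
identity), then `m ≤ m'` (that is, `k = m' - m ≥ 0`). -/
theorem equivariant_map_fixed_degree_one_dim_ineq
    (n m m' : ℕ)
    (f : OnePoint (EuclideanSpace ℝ (Fin n) × EuclideanSpace ℂ (Fin m)) →
         OnePoint (EuclideanSpace ℝ (Fin n) × EuclideanSpace ℂ (Fin m')))
    (hf : Continuous f)
    (hequiv : ∀ (z : Circle) p,
      f (OnePoint.map' (fun q => (q.1, (z : ℂ) • q.2)) p) =
        OnePoint.map' (fun q => (q.1, (z : ℂ) • q.2)) (f p))
    (g : OnePoint (EuclideanSpace ℝ (Fin n)) → OnePoint (EuclideanSpace ℝ (Fin n)))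
    (hg : Continuous g)
    (hrestrict : ∀ p, f (OnePoint.map' (fun x => (x, 0)) p) =
        OnePoint.map' (fun x => (x, 0)) (g p))
    (hdeg : ContinuousMap.Homotopic ⟨g, hg⟩ (ContinuousMap.id _)) :
    m ≤ m' := by
  by_contra hlt
  push Not at hlt
  refine BU.general (A := EuclideanSpace ℝ (Fin n)) (V := EuclideanSpace ℂ (Fin m))
    (W := EuclideanSpace ℂ (Fin m')) ?_ f hf ?_ g hg hrestrict hdeg
  · rw [finrank_real_of_complex, finrank_real_of_complex, finrank_euclideanSpace_fin,
      finrank_euclideanSpace_fin]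
    omega
  · intro p
    have h := hequiv (Circle.exp Real.pi) p
    have hz : ((Circle.exp Real.pi : Circle) : ℂ) = -1 := by
      rw [Circle.coe_exp, Complex.exp_pi_mul_I]
    simp only [hz, neg_smul, one_smul] at h
    exact h
end

section
/- Let Λ be a unimodular negative definite symmetric bilinear form on ℤ^b. If every characteristic vector c of Λ satisfies −Λ(c,c) ≥ b, then Λ is diagonalizable over ℤ, i.e., isomorphic to the standard negative definite diagonal form ⟨−1⟩^b. (Elkies' theorem, used in the paper to deduce Donaldson's theorem.) -/
section
open UpperHalfPlane Filter Topology Complex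
open scoped MatrixGroups Manifold ModularForm
local notation "Δ" => ModularForm.discriminant

lemma disc_S (z : ℍ) : Δ (ModularGroup.S • z) = (z:ℂ)^12 * Δ z := by
  have := congrFun ModularForm.discriminant_S_invariant z
  rw [ModularForm.SL_slash_apply, ModularGroup.denom_S] at this
  have hz := z.ne_zero
  rw [← this, mul_comm, mul_assoc, ← zpow_natCast, ← zpow_add₀ hz]
  norm_num

lemma denom_T' (z : ℍ) : denom ModularGroup.T z = 1 := by
  rw [ModularGroup.denom_apply]
  simp [ModularGroup.T]

lemma disc_T (z : ℍ) : Δ (ModularGroup.T • z) = Δ z := by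
  have := congrFun ModularForm.discriminant_T_invariant z
  rw [ModularForm.SL_slash_apply, denom_T', one_zpow, mul_one] at this
  exact this

noncomputable def elkF (n : ℕ) (h g : ℂ → ℂ) (τ : ℍ) : ℂ := h τ * h (τ + 1) * g τ / Δ τ ^ n

lemma elkF_cusp (n : ℕ) (h g : ℂ → ℂ)
    (hS : elkF n h g ∣[(0:ℤ)] ModularGroup.S = elkF n h g)
    (hT : elkF n h g ∣[(0:ℤ)] ModularGroup.T = elkF n h g)
    (hd : MDiff (elkF n h g)) (h0 : IsZeroAtImInfty (elkF n h g)) : elkF n h g = 0 := by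
  let f : CuspForm 𝒮ℒ 0 := 
    { toFun := elkF n h g
      slash_action_eq' := fun A hA => by
        obtain ⟨A, rfl⟩ := hA
        exact SlashInvariantForm.slash_action_generators_SL2Z hS hT A
      holo' := hd
      zero_at_cusps' := fun hc => by
        rw [Subgroup.IsArithmetic.isCusp_iff_isCusp_SL2Z] at hc
        rw [OnePoint.isZeroAt_iff_forall_SL2Z hc]
        intro γ _
        rw [SlashInvariantForm.slash_action_generators_SL2Z hS hT]
        exact h0 }
  obtain ⟨c, hc⟩ := ModularFormClass.levelOne_weight_zero_const f
  have hc' : elkF n h g = Function.const _ c := hc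
  rw [hc'] at h0 ⊢
  have : c = 0 := tendsto_nhds_unique tendsto_const_nhds h0
  subst this; rfl

lemma elk_vanish (n : ℕ) (h g : ℂ → ℂ) (hd : DifferentiableOn ℂ h {z | 0 < z.im})
    (hT2 : ∀ z : ℂ, 0 < z.im → h (z + 2) = h z)
    (hS : ∀ z : ℂ, 0 < z.im → h (-1 / z) = z ^ (4 * n) * h z)
    (hg : ∀ z : ℂ, 0 < z.im → h (1 - 1 / z) = z ^ (4 * n) * g z)
    (h0 : Tendsto (fun τ : ℍ => h τ) atImInfty (𝓝 0))
    (hgO : (fun τ : ℍ => g τ) =O[atImInfty] fun τ : ℍ => Real.exp (-2 * Real.pi * n * τ.im)) :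
    ∀ z : ℂ, 0 < z.im → h z = 0 := by
  have nz : ∀ z : ℂ, 0 < z.im → z ≠ 0 := by rintro z hz rfl; simp at hz
  have imS : ∀ z : ℂ, 0 < z.im → 0 < (-1 / z).im := fun z hz => by
    rw [neg_div, one_div]
    simpa using (UpperHalfPlane.im_inv_neg_coe_pos ⟨z, hz⟩)
  have imT : ∀ z : ℂ, 0 < z.im → 0 < (1 - 1 / z).im := fun z hz => by
    have := imS z hz
    simpa [neg_div] using this
  have gT : ∀ z : ℂ, 0 < z.im → g (z + 1) = g z := by
    intro z hz
    have hz1 : 0 < (z + 1).im := by simpa using hz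
    have e1 := hg _ hz1
    have hw : 0 < (-1 + -1 / z).im := by simpa using imS z hz
    have e2 := hS _ hw
    have e3 := hT2 _ hw
    have hzn := nz z hz
    have hz1n := nz _ hz1
    have hwn := nz _ hw
    rw [show (-1 + -1 / z) + 2 = 1 - 1 / z by ring, hg z hz] at e3
    have e4 : -1 / (-1 + -1 / z) = 1 - 1 / (z + 1) := by
      have : -1 + -1 / z = -(z+1)/z := by field_simp; ring
      rw [this]; field_simp; ring
    rw [e4, e1, ← e3] at e2
    have e5 : (-1 + -1 / z) ^ (4*n) * z^(4*n) = (z+1)^(4*n) := by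
      rw [← mul_pow, show (-1 + -1/z) * z = -(z+1) by field_simp; ring, Even.neg_pow]
      exact ⟨2*n, by ring⟩
    rw [← mul_assoc, e5] at e2
    exact mul_left_cancel₀ (pow_ne_zero _ hz1n) e2
  have gS : ∀ z : ℂ, 0 < z.im → g (-1 / z) = z ^ (4*n) * h (z + 1) := by
    intro z hz
    have e1 := hg _ (imS z hz)
    have hzn := nz z hz
    rw [show 1 - 1 / (-1 / z) = z + 1 by field_simp; ring] at e1
    rw [e1, ← mul_assoc, ← mul_pow, show z * (-1 / z) = -1 by field_simp, Even.neg_one_pow ⟨2*n, by ring⟩, one_mul]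
  have hd1 : DifferentiableOn ℂ (fun z => h (z + 1)) {z | 0 < z.im} :=
    hd.comp (by fun_prop) (fun z hz => by simpa using hz)
  have hd2 : DifferentiableOn ℂ (fun z => h (1 - 1 / z)) {z | 0 < z.im} :=
    hd.comp (fun z hz => by
      exact (DifferentiableAt.const_sub (differentiableAt_const 1 |>.div differentiableAt_id (nz z hz)) 1).differentiableWithinAt) (fun z hz => imT z hz)
  have hdg : DifferentiableOn ℂ g {z | 0 < z.im} := by
    have : DifferentiableOn ℂ (fun z => h (1 - 1 / z) / z ^ (4 * n)) {z | 0 < z.im} :=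
      hd2.div (by fun_prop) (fun z hz => pow_ne_zero _ (nz z hz))
    refine this.congr fun z hz => ?_
    rw [hg z hz, mul_div_cancel_left₀ _ (pow_ne_zero _ (nz z hz))]
  have hF : elkF n h g = 0 := by
    apply elkF_cusp
    · ext τ
      rw [ModularForm.SL_slash_apply]
      have hτ : 0 < (τ:ℂ).im := τ.2
      have hc : ((ModularGroup.S • τ : ℍ) : ℂ) = -1 / (τ:ℂ) := by
        rw [UpperHalfPlane.modular_S_smul]; simp [neg_div]
      have e1 := hS _ hτ
      have e2 := hg _ hτ
      have e3 := gS _ hτ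
      simp only [elkF, disc_S, hc, neg_zero, zpow_zero, mul_one]
      rw [show -1 / (τ:ℂ) + 1 = 1 - 1 / τ by ring, e1, e2, e3]
      have := nz _ hτ
      have := ModularForm.discriminant_ne_zero τ
      rw [mul_pow, ← pow_mul]
      field_simp
      ring
    · ext τ
      rw [ModularForm.SL_slash_apply]
      have hτ : 0 < (τ:ℂ).im := τ.2
      have hc : ((ModularGroup.T • τ : ℍ) : ℂ) = (τ:ℂ) + 1 := by
        rw [UpperHalfPlane.modular_T_smul]; simp [add_comm]
      simp only [elkF, disc_T, hc, neg_zero, zpow_zero, mul_one]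
      rw [gT _ hτ, add_assoc, show (1:ℂ) + 1 = 2 by norm_num, hT2 _ hτ]
      ring
    · have h1 : MDiff (fun τ : ℍ => h τ * h (τ + 1) * g τ) := by
        rw [UpperHalfPlane.mdifferentiable_iff]
        refine ((hd.mul hd1).mul hdg).congr fun z hz => ?_
        simp [ofComplex_apply_of_im_pos hz]
      exact h1.div (CuspForm.discriminant.holo'.pow n) (fun τ => pow_ne_zero _ (ModularForm.discriminant_ne_zero τ))
    · have hb : (fun τ : ℍ => g τ / Δ τ ^ n) =O[atImInfty] (fun _ => (1:ℝ)) := by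
        have h2 := (ModularForm.exp_isBigO_discriminant).pow n
        have h3 : (fun τ : ℍ => g τ) =O[atImInfty] fun τ => Δ τ ^ n := by
          refine hgO.trans ?_
          refine h2.congr_left fun τ => ?_
          rw [← Real.exp_nat_mul]; ring_nf
        exact (Asymptotics.div_isBoundedUnder_of_isBigO h3).isBigO_one ℝ
      have hsh : Tendsto (fun τ : ℍ => h (τ + 1)) atImInfty (𝓝 0) := by
        have : Tendsto (fun τ : ℍ => ModularGroup.T • τ) atImInfty atImInfty := by
          rw [atImInfty, tendsto_comap_iff]
          refine tendsto_comap.congr fun τ => ?_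
          rw [Function.comp_apply, UpperHalfPlane.modular_T_smul]
          simp
        refine (h0.comp this).congr fun τ => ?_
        rw [Function.comp_apply, UpperHalfPlane.modular_T_smul]
        simp [add_comm]
      have h4 := (h0.mul hsh)
      have h5 : (fun τ : ℍ => h τ * h (τ+1)) =o[atImInfty] (fun _ => (1:ℝ)) := by
        rw [Asymptotics.isLittleO_one_iff]; simpa using h4
      have h6 := h5.mul_isBigO hb
      simp only [mul_one] at h6
      rw [Asymptotics.isLittleO_one_iff] at h6
      refine h6.congr fun τ => ?_
      simp only [elkF]; ring
  have hop : IsOpen {z : ℂ | 0 < z.im} := isOpen_lt continuous_const Complex.continuous_im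
  have hcon : IsPreconnected {z : ℂ | 0 < z.im} := (convex_halfSpace_im_gt 0).isPreconnected
  have hprod : ∀ z ∈ {z : ℂ | 0 < z.im}, h z * (h (z + 1) * h (1 - 1 / z)) = 0 := by
    intro z hz
    have := congrFun hF ⟨z, hz⟩
    simp only [elkF, Pi.zero_apply, div_eq_zero_iff] at this
    rcases this with this | this
    · rw [hg z hz]
      linear_combination z ^ (4*n) * this
    · exact absurd this (pow_ne_zero _ (ModularForm.discriminant_ne_zero _))
  rcases (AnalyticOnNhd.eq_zero_or_eq_zero_of_mul_eq_zero (hd.analyticOnNhd hop) ((hd1.mul hd2).analyticOnNhd hop) hprod hcon) with h1 | h1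
  · exact h1
  rcases (AnalyticOnNhd.eq_zero_or_eq_zero_of_mul_eq_zero (hd1.analyticOnNhd hop) (hd2.analyticOnNhd hop) h1 hcon) with h1 | h1
  · intro z hz
    have := h1 (z + 1) (by simpa using hz)
    simp only [add_assoc, show (1:ℂ) + 1 = 2 by norm_num] at this
    rw [← hT2 z hz]; exact this
  · intro z hz
    have hw : 0 < (z + 1).im := by simpa using hz
    have := h1 (-1 / (z+1)) (imS _ hw)
    have hn := nz _ hw
    rw [← hT2 z hz, ← this]
    congr 1
    field_simp; ring

end

section
open Filter Topology Complex Matrix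

/-- the real quadratic form of a matrix -/
noncomputable def qf {n : ℕ} (A : Matrix (Fin n) (Fin n) ℝ) (x : Fin n → ℝ) : ℝ := x ⬝ᵥ (A *ᵥ x)

lemma summ1 (t : ℝ) (ht : 0 < t) (v : ℝ) :
    Summable fun k : ℤ => Real.exp (-Real.pi * t * (k + v) ^ 2) := by
  have := ((summable_jacobiTheta₂_term_iff (I * (t * v)) (I * t)).2 (by simpa using ht)).norm
  refine (this.mul_right (Real.exp (-Real.pi * t * v ^ 2))).congr fun k => ?_
  rw [norm_jacobiTheta₂_term, ← Real.exp_add]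
  congr 1
  simp
  ring

lemma summN (n : ℕ) (t : ℝ) (ht : 0 < t) : ∀ (v : Fin n → ℝ),
    Summable fun x : Fin n → ℤ => Real.exp (-Real.pi * t * ∑ i, ((x i : ℝ) + v i) ^ 2) := by
  induction n with
  | zero => intro v; exact Summable.of_finite
  | succ n ih =>
    intro v
    rw [← (Fin.consEquiv (fun _ : Fin (n+1) => ℤ)).summable_iff]
    have := (summ1 t ht (v 0)).mul_of_nonneg (ih (fun i => v i.succ)) (fun _ => (Real.exp_pos _).le)
      (fun _ => (Real.exp_pos _).le)
    refine this.congr fun x => ?_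
    rw [← Real.exp_add]
    simp [Fin.sum_univ_succ, Fin.consEquiv]
    ring

lemma qf_coercive {n : ℕ} (A : Matrix (Fin n) (Fin n) ℝ) (hA : ∀ x, x ≠ 0 → 0 < qf A x) :
    ∃ ε > 0, ∀ x, ε * ∑ i, x i ^ 2 ≤ qf A x := by
  have hcont : Continuous (qf A) := by unfold qf; fun_prop
  have hsm : ∀ (c : ℝ) x, qf A (c • x) = c ^ 2 * qf A x := by
    intro c x; simp [qf, Matrix.mulVec_smul, dotProduct_smul, smul_dotProduct]; ring
  let K : Set (Fin n → ℝ) := {x | ∑ i, x i ^ 2 = 1}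
  have hK : IsCompact K := by
    refine Metric.isCompact_of_isClosed_isBounded (isClosed_eq (by fun_prop) continuous_const) ?_
    refine (Metric.isBounded_closedBall (x := (0 : Fin n → ℝ)) (r := 1)).subset fun x hx => ?_
    rw [mem_closedBall_zero_iff, pi_norm_le_iff_of_nonneg zero_le_one]
    intro i
    rw [Real.norm_eq_abs, ← sq_le_one_iff_abs_le_one]
    have hx : ∑ i, x i ^ 2 = 1 := hx
    rw [← hx]
    exact Finset.single_le_sum (f := fun i => x i ^ 2) (fun i _ => sq_nonneg _) (Finset.mem_univ i)
  have key : ∃ ε > 0, ∀ x ∈ K, ε ≤ qf A x := by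
    rcases K.eq_empty_or_nonempty with h | h
    · exact ⟨1, one_pos, by simp [h]⟩
    · obtain ⟨y, hy, hmin⟩ := hK.exists_isMinOn h hcont.continuousOn
      refine ⟨qf A y, hA y ?_, fun x hx => hmin hx⟩
      rintro rfl
      have hy : ∑ i, (0 : Fin n → ℝ) i ^ 2 = 1 := hy
      simp at hy
  obtain ⟨ε, hε, h⟩ := key
  refine ⟨ε, hε, fun x => ?_⟩
  by_cases hx : x = 0
  · subst hx; simp [qf]
  · have hs : 0 < ∑ i, x i ^ 2 := by
      obtain ⟨i, hi⟩ := Function.ne_iff.1 hx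
      exact Finset.sum_pos' (fun i _ => sq_nonneg _) ⟨i, Finset.mem_univ i, by
        have hi : x i ≠ 0 := hi
        positivity⟩
    set s := ∑ i, x i ^ 2
    have h1 := h ((√s)⁻¹ • x) (by
      change ∑ i, ((√s)⁻¹ • x) i ^ 2 = 1
      simp only [Pi.smul_apply, smul_eq_mul, mul_pow, ← Finset.mul_sum, inv_pow, Real.sq_sqrt hs.le]
      exact inv_mul_cancel₀ hs.ne')
    rw [hsm, inv_pow, Real.sq_sqrt hs.le, inv_mul_eq_div, le_div_iff₀ hs] at h1
    exact h1

lemma summQ {n : ℕ} (A : Matrix (Fin n) (Fin n) ℝ) (hA : ∀ x, x ≠ 0 → 0 < qf A x) (t : ℝ) (ht : 0 < t)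
    (v : Fin n → ℝ) :
    Summable fun x : Fin n → ℤ => Real.exp (-Real.pi * t * qf A (fun i => (x i : ℝ) + v i)) := by
  obtain ⟨ε, hε, h⟩ := qf_coercive A hA
  refine Summable.of_nonneg_of_le (fun _ => (Real.exp_pos _).le) (fun x => ?_) (summN n (t * ε) (by positivity) v)
  rw [Real.exp_le_exp]
  have := h (fun i => (x i : ℝ) + v i)
  have h2 : 0 < Real.pi * t := by positivity
  nlinarith [mul_le_mul_of_nonneg_left this h2.le]

lemma pois1 (a : ℂ) (ha : 0 < a.re) (s w : ℝ) :
    ∑' k : ℤ, cexp (-Real.pi * a * (k + s) ^ 2 + 2 * Real.pi * I * (w * k)) =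
      (a ^ (1 / 2 : ℂ))⁻¹ * ∑' m : ℤ, cexp (-Real.pi / a * (m - w) ^ 2 + 2 * Real.pi * I * ((m - w) * s)) := by
  have ha0 : a ≠ 0 := by rintro rfl; simp at ha
  have := Complex.tsum_exp_neg_quadratic ha (-a * s + I * w)
  have h2 : ∀ k : ℤ, cexp (-Real.pi * a * (k + s) ^ 2 + 2 * Real.pi * I * (w * k)) =
     cexp (-Real.pi * a * s ^ 2) * cexp (-Real.pi * a * k ^ 2 + 2 * Real.pi * (-a * s + I * w) * k) := by
    intro k; rw [← Complex.exp_add]; congr 1; ring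
  have h3 : ∀ m : ℤ, cexp (-Real.pi / a * (m - w) ^ 2 + 2 * Real.pi * I * ((m - w) * s)) =
     cexp (-Real.pi * a * s ^ 2) * cexp (-Real.pi / a * (m + I * (-a * s + I * w)) ^ 2) := by
    intro k; rw [← Complex.exp_add]; congr 1; field_simp; ring_nf; simp [Complex.I_sq]; ring_nf
  simp_rw [h2, h3, tsum_mul_left, this]
  ring

lemma cpow_half (z : ℂ) (a : ℝ) (ha : 0 < a) :
    (z * a) ^ (1 / 2 : ℂ) = z ^ (1/2 : ℂ) * ((√a : ℝ) : ℂ) := by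
  by_cases hz : z = 0
  · subst hz; simp
  have ha0 : (a : ℂ) ≠ 0 := by exact_mod_cast ha.ne'
  rw [Real.sqrt_eq_rpow, Complex.ofReal_cpow ha.le, Complex.cpow_def_of_ne_zero (mul_ne_zero hz ha0),
    Complex.cpow_def_of_ne_zero hz, Complex.cpow_def_of_ne_zero ha0, Complex.log_mul_ofReal a ha z hz,
    ← Complex.exp_add, Complex.ofReal_log ha.le]
  congr 1
  push_cast
  ring

lemma posDef_qf {n : ℕ} {A : Matrix (Fin n) (Fin n) ℝ} (hA : A.PosDef) : ∀ x, x ≠ 0 → 0 < qf A x := by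
  intro x hx
  simpa [qf] using hA.dotProduct_mulVec_pos hx

lemma posDef_of_qf {n : ℕ} {A : Matrix (Fin n) (Fin n) ℝ} (hs : ∀ i j, A i j = A j i)
    (hA : ∀ x, x ≠ 0 → 0 < qf A x) : A.PosDef := by
  refine Matrix.PosDef.of_dotProduct_mulVec_pos (by ext i j; simp [hs i j]) fun x hx => ?_
  simpa [qf] using hA x hx

/-- Schur complement of the top-left entry -/
noncomputable def schur {n : ℕ} (A : Matrix (Fin (n+1)) (Fin (n+1)) ℝ) : Matrix (Fin n) (Fin n) ℝ :=
  Matrix.of fun i j => A i.succ j.succ - A 0 i.succ * A 0 j.succ / A 0 0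

lemma schur_mulVec {n : ℕ} (A : Matrix (Fin (n+1)) (Fin (n+1)) ℝ) (x : Fin n → ℝ) (i : Fin n) :
    (schur A *ᵥ x) i = ∑ j, A i.succ j.succ * x j - A 0 i.succ / A 0 0 * ∑ j, A 0 j.succ * x j := by
  simp only [schur, Matrix.mulVec, dotProduct, Matrix.of_apply, sub_mul, Finset.sum_sub_distrib,
    Finset.mul_sum]
  congr 1
  exact Finset.sum_congr rfl fun j _ => by ring

lemma qf_cons {n : ℕ} (A : Matrix (Fin (n+1)) (Fin (n+1)) ℝ) (hs : ∀ i j, A i j = A j i)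
    (ha : A 0 0 ≠ 0) (k : ℝ) (x : Fin n → ℝ) :
    qf A (Fin.cons k x) = A 0 0 * (k + ∑ i, A 0 i.succ / A 0 0 * x i) ^ 2 + qf (schur A) x := by
  have h1 : ∑ i, A 0 i.succ / A 0 0 * x i = (∑ i, A 0 i.succ * x i) / A 0 0 := by
    rw [Finset.sum_div]; exact Finset.sum_congr rfl fun j _ => by ring
  have h2 : qf (schur A) x = ∑ i, x i * ∑ j, A i.succ j.succ * x j - (∑ i, A 0 i.succ * x i)^2 / A 0 0 := by
    simp only [qf, dotProduct, schur_mulVec, mul_sub, Finset.sum_sub_distrib]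
    congr 1
    rw [sq, Finset.sum_mul, Finset.sum_div]
    exact Finset.sum_congr rfl fun j _ => by ring
  rw [h1, h2]
  simp only [qf, dotProduct, Matrix.mulVec, Fin.sum_univ_succ, Fin.cons_zero, Fin.cons_succ, mul_add, Finset.sum_add_distrib]
  have h3 : ∑ i, x i * (A i.succ 0 * k) = k * ∑ i, A 0 i.succ * x i := by
    rw [Finset.mul_sum]; exact Finset.sum_congr rfl fun j _ => by rw [hs]; ring
  rw [h3]
  field_simp
  ring

lemma schur_posDef {n : ℕ} {A : Matrix (Fin (n+1)) (Fin (n+1)) ℝ} (hA : A.PosDef) :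
    0 < A 0 0 ∧ (∀ i j, A i j = A j i) ∧ (schur A).PosDef := by
  have hs : ∀ i j, A i j = A j i := fun i j => by
    simpa using (hA.1.apply i j).symm
  have ha : 0 < A 0 0 := hA.diag_pos
  refine ⟨ha, hs, posDef_of_qf (fun i j => ?_) fun x hx => ?_⟩
  · simp [schur, hs i.succ j.succ]; ring
  · have := qf_cons A hs ha.ne' (-∑ i, A 0 i.succ / A 0 0 * x i) x
    rw [neg_add_cancel, zero_pow two_ne_zero, mul_zero, zero_add] at this
    rw [← this]
    apply posDef_qf hA
    contrapose! hx
    ext i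
    simpa using congrFun hx i.succ

lemma qf_inv {n : ℕ} {A : Matrix (Fin n) (Fin n) ℝ} (hA : A.PosDef) (u : Fin n → ℝ) :
    qf A⁻¹ (A *ᵥ u) = qf A u := by
  have : IsUnit A.det := (Matrix.isUnit_iff_isUnit_det A).1 hA.isUnit
  rw [qf, Matrix.mulVec_mulVec, Matrix.nonsing_inv_mul A this, Matrix.one_mulVec, qf, dotProduct_comm]

lemma mulVec_surj {n : ℕ} {A : Matrix (Fin n) (Fin n) ℝ} (hA : A.PosDef) (w : Fin n → ℝ) :
    ∃ u, A *ᵥ u = w := by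
  have : IsUnit A.det := (Matrix.isUnit_iff_isUnit_det A).1 hA.isUnit
  exact ⟨A⁻¹ *ᵥ w, by rw [Matrix.mulVec_mulVec, Matrix.mul_nonsing_inv A this, Matrix.one_mulVec]⟩

lemma qf_inv_cons {n : ℕ} {A : Matrix (Fin (n+1)) (Fin (n+1)) ℝ} (hA : A.PosDef) (w : Fin (n+1) → ℝ) :
    qf A⁻¹ w = w 0 ^ 2 / A 0 0 + qf (schur A)⁻¹ (fun i => w i.succ - w 0 * (A 0 i.succ / A 0 0)) := by
  obtain ⟨ha, hs, hS⟩ := schur_posDef hA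
  obtain ⟨u, rfl⟩ := mulVec_surj hA w
  obtain ⟨k, x, rfl⟩ : ∃ k x, u = Fin.cons k x := ⟨u 0, Fin.tail u, (Fin.cons_self_tail u).symm⟩
  have h1 : (A *ᵥ (Fin.cons k x : Fin (n+1) → ℝ)) 0 = A 0 0 * (k + ∑ i, A 0 i.succ / A 0 0 * x i) := by
    simp only [Matrix.mulVec, dotProduct, Fin.sum_univ_succ, Fin.cons_zero, Fin.cons_succ, mul_add, Finset.mul_sum]
    congr 1
    exact Finset.sum_congr rfl fun j _ => by field_simp
  have h2 : (fun i : Fin n => (A *ᵥ (Fin.cons k x : Fin (n+1) → ℝ)) i.succ - (A *ᵥ (Fin.cons k x : Fin (n+1) → ℝ)) 0 * (A 0 i.succ / A 0 0)) = schur A *ᵥ x := by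
    ext i
    rw [schur_mulVec]
    simp only [Matrix.mulVec, dotProduct, Fin.sum_univ_succ, Fin.cons_zero, Fin.cons_succ]
    rw [hs i.succ 0]
    field_simp
    ring
  rw [h2, qf_inv hA, qf_inv hS, h1, qf_cons A hs ha.ne']
  field_simp

lemma norm_term (z : ℂ) (q w : ℝ) :
    ‖cexp (-Real.pi * z * q + 2 * Real.pi * I * w)‖ = Real.exp (-Real.pi * z.re * q) := by
  rw [Complex.norm_exp]
  congr 1
  simp [mul_assoc]

set_option maxHeartbeats 1600000 in
lemma poisson (n : ℕ) : ∀ A : Matrix (Fin n) (Fin n) ℝ, A.PosDef →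
    ∃ D : ℝ, ∀ z : ℂ, 0 < z.re → ∀ v : Fin n → ℝ,
    ∑' x : Fin n → ℤ, cexp (-Real.pi * z * (qf A (fun i => (x i : ℝ)) : ℝ) + 2 * Real.pi * I * ((∑ i, v i * x i : ℝ) : ℂ)) =
    (z ^ (1/2 : ℂ))⁻¹ ^ n * D * ∑' y : Fin n → ℤ, cexp (-Real.pi / z * (qf A⁻¹ (fun i => (y i : ℝ) - v i) : ℝ)) := by
  induction n with
  | zero =>
    intro A hA
    refine ⟨1, fun z hz v => ?_⟩
    simp [tsum_fintype, qf]
  | succ n ih =>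
    intro A hA
    obtain ⟨ha, hs, hS⟩ := schur_posDef hA
    obtain ⟨D, hD⟩ := ih _ hS
    set a := A 0 0 with hadef
    refine ⟨D * (√a)⁻¹, fun z hz v => ?_⟩
    have hz0 : z ≠ 0 := by rintro rfl; simp at hz
    have ha0 : (a : ℂ) ≠ 0 := by exact_mod_cast ha.ne'
    have hzi : 0 < (z⁻¹).re := by rw [Complex.inv_re]; exact div_pos hz (Complex.normSq_pos.2 hz0)
    have hza : 0 < (z * a).re := by simpa using mul_pos hz ha
    let l : Fin n → ℝ := fun i => A 0 i.succ / a
    let L : (Fin n → ℤ) → ℝ := fun x => ∑ i, l i * x i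
    let S : (Fin n → ℤ) → ℝ := fun x => qf (schur A) (fun i => (x i : ℝ))
    let V : (Fin n → ℤ) → ℝ := fun x => ∑ i, v i.succ * x i
    -- split the sum
    have hsum1 : Summable fun x : Fin (n+1) → ℤ => cexp (-Real.pi * z * (qf A (fun i => (x i : ℝ)) : ℝ) + 2 * Real.pi * I * ((∑ i, v i * x i : ℝ) : ℂ)) := by
      apply Summable.of_norm
      simp_rw [norm_term]
      simpa using summQ A (posDef_qf hA) z.re hz 0
    have hsum1' := (Fin.consEquiv (fun _ : Fin (n+1) => ℤ)).summable_iff.2 hsum1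
    rw [← (Fin.consEquiv (fun _ : Fin (n+1) => ℤ)).tsum_eq]
    have hsplit : ∀ p : ℤ × (Fin n → ℤ), cexp (-Real.pi * z * (qf A (fun i => ((Fin.consEquiv (fun _ : Fin (n+1) => ℤ)) p i : ℝ)) : ℝ) + 2 * Real.pi * I * ((∑ i, v i * (Fin.consEquiv (fun _ : Fin (n+1) => ℤ)) p i : ℝ) : ℂ))
        = cexp (-Real.pi * z * S p.2 + 2 * Real.pi * I * V p.2) *
          cexp (-Real.pi * (z * a) * (p.1 + L p.2) ^ 2 + 2 * Real.pi * I * (v 0 * p.1)) := by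
      rintro ⟨k, x⟩
      have e1 : (fun i => ((Fin.consEquiv (fun _ : Fin (n+1) => ℤ)) (k, x) i : ℝ)) = Fin.cons (k:ℝ) (fun i => (x i : ℝ)) := by
        ext i; refine Fin.cases ?_ (fun j => ?_) i <;> simp [Fin.consEquiv]
      rw [e1, qf_cons A hs ha.ne', ← Complex.exp_add]
      congr 1
      simp only [Fin.sum_univ_succ, Fin.consEquiv, Equiv.coe_fn_mk, Fin.cons_zero, Fin.cons_succ, S, V, L, l]
      push_cast
      ring
    simp_rw [Function.comp_def, hsplit] at hsum1'
    simp_rw [hsplit]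
    rw [hsum1'.tsum_prod' (fun k => hsum1'.prod_factor k)]
    rw [← hsum1'.tsum_comm]
    simp_rw [tsum_mul_left, pois1 _ hza, cpow_half z a ha]
    have hT : ∀ (x : Fin n → ℤ) (m : ℤ), cexp (-Real.pi * z * S x + 2 * Real.pi * I * V x) *
        cexp (-Real.pi / (z * a) * (m - v 0) ^ 2 + 2 * Real.pi * I * ((m - v 0) * L x)) =
        cexp (-Real.pi * (z * a)⁻¹ * (((m - v 0) ^ 2 : ℝ) : ℂ) + 2 * Real.pi * I * (0:ℝ)) *
        cexp (-Real.pi * z * S x + 2 * Real.pi * I * ((∑ i, (v i.succ + (m - v 0) * l i) * x i : ℝ) : ℂ)) := by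
      intro x m
      have : ∑ i, (v i.succ + (m - v 0) * l i) * x i = V x + (m - v 0) * L x := by
        simp only [V, L, Finset.mul_sum, ← Finset.sum_add_distrib]
        exact Finset.sum_congr rfl fun j _ => by ring
      rw [this, ← Complex.exp_add, ← Complex.exp_add]
      congr 1
      push_cast
      ring
    have hzai : 0 < ((z * a)⁻¹).re := by
      rw [Complex.inv_re]; exact div_pos hza (Complex.normSq_pos.2 (mul_ne_zero hz0 ha0))
    have hsum2 : Summable fun p : ℤ × (Fin n → ℤ) =>
        cexp (-Real.pi * (z * a)⁻¹ * (((p.1 - v 0) ^ 2 : ℝ) : ℂ) + 2 * Real.pi * I * (0:ℝ)) *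
        cexp (-Real.pi * z * S p.2 + 2 * Real.pi * I * ((∑ i, (v i.succ + (p.1 - v 0) * l i) * p.2 i : ℝ) : ℂ)) := by
      apply Summable.of_norm
      simp_rw [norm_mul, norm_term]
      refine Summable.mul_of_nonneg (f := fun m : ℤ => Real.exp (-Real.pi * ((z * a)⁻¹).re * (m - v 0) ^ 2))
        (g := fun x : Fin n → ℤ => Real.exp (-Real.pi * z.re * S x)) ?_ ?_ (fun _ => (Real.exp_pos _).le) (fun _ => (Real.exp_pos _).le)
      · simpa [sub_eq_add_neg] using summ1 _ hzai (-v 0)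
      · simpa using summQ _ (posDef_qf hS) z.re hz 0
    have hL : ∀ x : Fin n → ℤ, cexp (-Real.pi * z * S x + 2 * Real.pi * I * V x) *
        ((z ^ (1/2 : ℂ) * ((√a : ℝ) : ℂ))⁻¹ * ∑' m : ℤ, cexp (-Real.pi / (z * a) * (m - v 0) ^ 2 + 2 * Real.pi * I * ((m - v 0) * L x)))
        = (z ^ (1/2 : ℂ) * ((√a : ℝ) : ℂ))⁻¹ * ∑' m : ℤ, cexp (-Real.pi * (z * a)⁻¹ * (((m - v 0) ^ 2 : ℝ) : ℂ) + 2 * Real.pi * I * (0:ℝ)) *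
        cexp (-Real.pi * z * S x + 2 * Real.pi * I * ((∑ i, (v i.succ + (m - v 0) * l i) * x i : ℝ) : ℂ)) := by
      intro x
      simp_rw [← hT, tsum_mul_left]
      ring
    simp_rw [hL]
    rw [tsum_mul_left, hsum2.tsum_comm]
    simp_rw [tsum_mul_left]
    have hI : ∀ m : ℤ, ∑' x : Fin n → ℤ, cexp (-Real.pi * z * S x + 2 * Real.pi * I * ((∑ i, (v i.succ + (m - v 0) * l i) * x i : ℝ) : ℂ)) = _ :=
      fun m => hD z hz (fun i => v i.succ + (m - v 0) * l i)
    simp_rw [hI]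
    -- the right hand side
    have hsum3 : Summable fun y : Fin (n+1) → ℤ => cexp (-Real.pi / z * (qf A⁻¹ (fun i => (y i : ℝ) - v i) : ℝ)) := by
      apply Summable.of_norm
      have e : ∀ q : ℝ, ‖cexp (-Real.pi / z * q)‖ = Real.exp (-Real.pi * (z⁻¹).re * q) := by
        intro q
        rw [← norm_term _ _ 0]
        simp [div_eq_mul_inv]
      simp_rw [e]
      simpa [sub_eq_add_neg] using summQ A⁻¹ (posDef_qf hA.inv) _ hzi (fun i => -v i)
    have hsum3' := (Fin.consEquiv (fun _ : Fin (n+1) => ℤ)).summable_iff.2 hsum3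
    rw [← (Fin.consEquiv (fun _ : Fin (n+1) => ℤ)).tsum_eq (fun y : Fin (n+1) → ℤ => cexp (-Real.pi / z * (qf A⁻¹ (fun i => (y i : ℝ) - v i) : ℝ)))]
    have hR : ∀ p : ℤ × (Fin n → ℤ), cexp (-Real.pi / z * (qf A⁻¹ (fun i => ((Fin.consEquiv (fun _ : Fin (n+1) => ℤ)) p i : ℝ) - v i) : ℝ)) =
        cexp (-Real.pi * (z * a)⁻¹ * (((p.1 - v 0) ^ 2 : ℝ) : ℂ) + 2 * Real.pi * I * (0:ℝ)) *
        cexp (-Real.pi / z * (qf (schur A)⁻¹ (fun i => (p.2 i : ℝ) - (v i.succ + (p.1 - v 0) * l i)) : ℝ)) := by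
      rintro ⟨m, y⟩
      rw [qf_inv_cons hA, ← Complex.exp_add]
      have e2 : (fun i : Fin n => ((Fin.consEquiv (fun _ : Fin (n+1) => ℤ)) (m, y) i.succ : ℝ) - v i.succ -
          (((Fin.consEquiv (fun _ : Fin (n+1) => ℤ)) (m, y) 0 : ℝ) - v 0) * (A 0 i.succ / A 0 0)) =
          (fun i => (y i : ℝ) - (v i.succ + (m - v 0) * l i)) := by
        ext i
        simp [Fin.consEquiv, l, hadef]
        ring
      rw [e2]
      congr 1
      simp [Fin.consEquiv, ← hadef]
      field_simp
      ring
    simp_rw [Function.comp_def, hR] at hsum3'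
    simp_rw [hR]
    rw [hsum3'.tsum_prod' (fun k => hsum3'.prod_factor k)]
    simp_rw [tsum_mul_left]
    rw [← tsum_mul_left, ← tsum_mul_left]
    refine tsum_congr fun m => ?_
    push_cast
    rw [pow_succ, mul_inv]
    ring

end

section
open UpperHalfPlane hiding I
open Filter Topology Complex Matrix
/-- integral quadratic form of an integer matrix -/
def iq {n : ℕ} (G : Matrix (Fin n) (Fin n) ℤ) (x : Fin n → ℤ) : ℤ := x ⬝ᵥ (G *ᵥ x)

/-- The hypotheses on the (positive definite) Gram matrix. -/
structure ElkLat (n : ℕ) (G : Matrix (Fin n) (Fin n) ℤ) : Prop where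
  symm : ∀ i j, G i j = G j i
  unit : IsUnit G.det
  pos : ∀ x, x ≠ 0 → 0 < iq G x
  char : ∀ c : Fin n → ℤ, (∀ x, (2 : ℤ) ∣ iq G x - c ⬝ᵥ (G *ᵥ x)) → (n : ℤ) ≤ iq G c

/-- the real version of an integer matrix -/
noncomputable def rmat {n : ℕ} (G : Matrix (Fin n) (Fin n) ℤ) : Matrix (Fin n) (Fin n) ℝ := G.map (Int.cast : ℤ → ℝ)

lemma qf_cast {n : ℕ} (G : Matrix (Fin n) (Fin n) ℤ) (x : Fin n → ℤ) :
    qf (rmat G) (fun i => (x i : ℝ)) = (iq G x : ℝ) := by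
  simp [qf, iq, rmat, dotProduct, Matrix.mulVec]

lemma rmat_posDef {n : ℕ} {G : Matrix (Fin n) (Fin n) ℤ} (hG : ElkLat n G) : (rmat G).PosDef := by
  have hsm : ∀ (c : ℝ) x, qf (rmat G) (c • x) = c ^ 2 * qf (rmat G) x := by
    intro c x; simp [qf, Matrix.mulVec_smul, dotProduct_smul, smul_dotProduct]; ring
  have hnonneg : ∀ x : Fin n → ℤ, 0 ≤ iq G x := fun x => by
    by_cases hx : x = 0
    · subst hx; simp [iq]
    · exact (hG.pos x hx).le
  have hrat : ∀ x : Fin n → ℚ, 0 ≤ qf (rmat G) (fun i => (x i : ℝ)) := by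
    intro x
    obtain ⟨b, hb⟩ := IsLocalization.exist_integer_multiples_of_finite (nonZeroDivisors ℤ) x
    choose y hy using hb
    have hb0 : ((b : ℤ) : ℝ) ≠ 0 := by exact_mod_cast nonZeroDivisors.coe_ne_zero b
    have h1 : (fun i => (y i : ℝ)) = ((b : ℤ) : ℝ) • (fun i => (x i : ℝ)) := by
      ext i
      have := hy i
      simp at this
      simp
      exact_mod_cast this
    have h2 := qf_cast G y
    rw [h1, hsm] at h2
    have h3 : (0:ℝ) ≤ iq G y := by exact_mod_cast hnonneg y
    rw [← h2] at h3
    exact nonneg_of_mul_nonneg_right h3 (by positivity)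
  have hdense : DenseRange (fun x : Fin n → ℚ => (fun i => (x i : ℝ))) :=
    DenseRange.piMap (fun _ : Fin n => Rat.denseRange_cast (𝕜 := ℝ))
  have hnn : ∀ x, 0 ≤ qf (rmat G) x := by
    intro x
    refine hdense.induction_on x (isClosed_le continuous_const (by unfold qf; fun_prop)) hrat
  have hps : (rmat G).PosSemidef := by
    refine Matrix.PosSemidef.of_dotProduct_mulVec_nonneg (by ext i j; simp [rmat, hG.symm i j]) fun x => ?_
    simpa [qf] using hnn x
  rw [hps.posDef_iff_det_ne_zero]
  have : (rmat G).det = ((G.det : ℤ) : ℝ) := by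
    rw [rmat]; exact (Int.cast_det G).symm
  rw [this]
  exact_mod_cast hG.unit.ne_zero

lemma poisson_lat {n : ℕ} {G : Matrix (Fin n) (Fin n) ℤ} (hG : ElkLat n G) (z : ℂ) (hz : 0 < z.re) (w : Fin n → ℝ) :
    ∑' x : Fin n → ℤ, cexp (-Real.pi * z * (iq G x : ℝ) + 2 * Real.pi * I * ((∑ i, (rmat G *ᵥ w) i * x i : ℝ) : ℂ)) =
    (z ^ (1/2 : ℂ))⁻¹ ^ n * ∑' x : Fin n → ℤ, cexp (-Real.pi / z * (qf (rmat G) (fun i => (x i : ℝ) - w i) : ℝ)) := by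
  have hP := rmat_posDef hG
  obtain ⟨D, hD⟩ := poisson n _ hP
  let e : (Fin n → ℤ) ≃ (Fin n → ℤ) :=
    { toFun := fun x => G *ᵥ x
      invFun := fun x => G⁻¹ *ᵥ x
      left_inv := fun x => by simp [Matrix.mulVec_mulVec, Matrix.nonsing_inv_mul G hG.unit]
      right_inv := fun x => by simp [Matrix.mulVec_mulVec, Matrix.mul_nonsing_inv G hG.unit] }
  have key : ∀ z : ℂ, 0 < z.re → ∀ w : Fin n → ℝ,
      ∑' x : Fin n → ℤ, cexp (-Real.pi * z * (iq G x : ℝ) + 2 * Real.pi * I * ((∑ i, (rmat G *ᵥ w) i * x i : ℝ) : ℂ)) =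
      (z ^ (1/2 : ℂ))⁻¹ ^ n * D * ∑' x : Fin n → ℤ, cexp (-Real.pi / z * (qf (rmat G) (fun i => (x i : ℝ) - w i) : ℝ)) := by
    intro z hz w
    have := hD z hz (rmat G *ᵥ w)
    simp_rw [qf_cast] at this
    rw [this]
    congr 1
    rw [← e.tsum_eq]
    refine tsum_congr fun x => ?_
    congr 3
    rw [← qf_inv hP]
    congr 1
    have : (fun i => (x i : ℝ) - w i) = (fun i => (x i : ℝ)) - w := rfl
    rw [this, Matrix.mulVec_sub]
    ext i
    simp [e, rmat, Matrix.mulVec, dotProduct]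
  have hD1 : D = 1 := by
    have h1 := key 1 (by simp) 0
    have hs : Summable fun x : Fin n → ℤ => Real.exp (-Real.pi * (iq G x : ℝ)) := by
      simpa [qf_cast] using summQ (rmat G) (posDef_qf hP) 1 one_pos 0
    have hpos : 0 < ∑' x : Fin n → ℤ, Real.exp (-Real.pi * (iq G x : ℝ)) :=
      hs.tsum_pos (fun _ => (Real.exp_pos _).le) 0 (Real.exp_pos _)
    have h2 : ∑' x : Fin n → ℤ, cexp (-Real.pi * (iq G x : ℝ)) = ((∑' x : Fin n → ℤ, Real.exp (-Real.pi * (iq G x : ℝ)) : ℝ) : ℂ) := by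
      push_cast; rfl
    simp only [mul_one, Matrix.mulVec_zero, Pi.zero_apply, zero_mul, Finset.sum_const_zero, ofReal_zero, mul_zero, add_zero,
      one_cpow, inv_one, one_pow, one_mul, div_one, sub_zero, qf_cast] at h1
    rw [h2] at h1
    have h3 : (∑' x : Fin n → ℤ, Real.exp (-Real.pi * (iq G x : ℝ))) = D * ∑' x : Fin n → ℤ, Real.exp (-Real.pi * (iq G x : ℝ)) := by
      exact_mod_cast h1
    nlinarith
  have := key z hz w
  rw [hD1] at this
  simpa using this

/-- theta series of a family of exponents -/
noncomputable def th {ι : Type*} (q : ι → ℝ) (τ : ℂ) : ℂ := ∑' i, cexp (Real.pi * I * τ * q i)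

lemma norm_th_term (τ : ℂ) (q : ℝ) : ‖cexp (Real.pi * I * τ * q)‖ = Real.exp (-Real.pi * τ.im * q) := by
  rw [Complex.norm_exp]; congr 1; simp

lemma th_bound {ι : Type*} (q : ι → ℝ) (m : ℝ) (hm : ∀ i, m ≤ q i)
    (hs : Summable fun i => Real.exp (-Real.pi * 1 * q i)) :
    ∃ C, ∀ τ : ℂ, 1 ≤ τ.im → ‖th q τ‖ ≤ C * Real.exp (-Real.pi * m * τ.im) := by
  refine ⟨(∑' i, Real.exp (-Real.pi * 1 * q i)) * Real.exp (Real.pi * m), fun τ hτ => ?_⟩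
  rw [mul_assoc, ← Real.exp_add]
  refine tsum_of_norm_bounded (hs.hasSum.mul_right _) fun i => ?_
  rw [norm_th_term, ← Real.exp_add, Real.exp_le_exp]
  have h1 : 0 ≤ (τ.im - 1) * (q i - m) := mul_nonneg (by linarith) (by linarith [hm i])
  nlinarith [mul_nonneg Real.pi_pos.le h1]

lemma th_diff {ι : Type*} (q : ι → ℝ) (hm : ∀ i, 0 ≤ q i)
    (hs : ∀ t > 0, Summable fun i => Real.exp (-Real.pi * t * q i)) :
    DifferentiableOn ℂ (th q) {z | 0 < z.im} := by
  intro τ hτ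
  have hτ : 0 < τ.im := hτ
  have hop : IsOpen {z : ℂ | τ.im / 2 < z.im} := isOpen_lt continuous_const Complex.continuous_im
  have : DifferentiableOn ℂ (th q) {z | τ.im / 2 < z.im} := by
    refine differentiableOn_tsum_of_summable_norm (hs (τ.im / 2) (by positivity)) (fun i => by fun_prop) hop
      fun i w hw => ?_
    rw [norm_th_term, Real.exp_le_exp]
    have hw : τ.im / 2 < w.im := hw
    nlinarith [mul_nonneg Real.pi_pos.le (mul_nonneg (sub_nonneg.2 hw.le) (hm i))]
  exact ((this τ (by simp; linarith)).differentiableAt (hop.mem_nhds (by simp; linarith))).differentiableWithinAt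

lemma re_I_div (τ : ℂ) (hτ : 0 < τ.im) : 0 < (I / τ).re := by
  have h0 : τ ≠ 0 := by rintro rfl; simp at hτ
  rw [Complex.div_re]
  simp
  exact div_pos hτ (Complex.normSq_pos.2 h0)

lemma th_S {n : ℕ} {G : Matrix (Fin n) (Fin n) ℤ} (hG : ElkLat n G) (τ : ℂ) (hτ : 0 < τ.im) :
    th (fun x => (iq G x : ℝ)) (-1 / τ) = ((I / τ) ^ (1/2 : ℂ))⁻¹ ^ n * th (fun x => (iq G x : ℝ)) τ := by
  have h0 : τ ≠ 0 := by rintro rfl; simp at hτ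
  have := poisson_lat hG (I / τ) (re_I_div τ hτ) 0
  simp only [Matrix.mulVec_zero, Pi.zero_apply, zero_mul, Finset.sum_const_zero, ofReal_zero, mul_zero, add_zero,
      sub_zero, qf_cast] at this
  unfold th
  convert this using 2
  · ext x; congr 1; ring
  · congr 1; ext x; congr 1; rw [div_div_eq_mul_div]; field_simp; simp

lemma sum_rmat {n : ℕ} {G : Matrix (Fin n) (Fin n) ℤ} (hs : ∀ i j, G i j = G j i) (c x : Fin n → ℤ) :
    ∑ i, (rmat G *ᵥ (fun i => (c i : ℝ) / 2)) i * x i = ((c ⬝ᵥ (G *ᵥ x) : ℤ) : ℝ) / 2 := by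
  simp only [rmat, dotProduct, Matrix.mulVec, Matrix.map_apply, Finset.sum_mul, Finset.mul_sum]
  push_cast
  rw [Finset.sum_comm, Finset.sum_div]
  refine Finset.sum_congr rfl fun i _ => ?_
  rw [Finset.sum_div]
  refine Finset.sum_congr rfl fun j _ => ?_
  rw [hs]; ring

lemma th_TS {n : ℕ} {G : Matrix (Fin n) (Fin n) ℤ} (hG : ElkLat n G) (c : Fin n → ℤ)
    (hc : ∀ x, (2 : ℤ) ∣ iq G x - c ⬝ᵥ (G *ᵥ x)) (τ : ℂ) (hτ : 0 < τ.im) :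
    th (fun x => (iq G x : ℝ)) (1 - 1 / τ) = ((I / τ) ^ (1/2 : ℂ))⁻¹ ^ n *
      th (fun x : Fin n → ℤ => qf (rmat G) (fun i => (x i : ℝ) + (-(c i : ℝ) / 2))) τ := by
  have h0 : τ ≠ 0 := by rintro rfl; simp at hτ
  have := poisson_lat hG (I / τ) (re_I_div τ hτ) (fun i => (c i : ℝ) / 2)
  unfold th
  simp_rw [sum_rmat hG.symm] at this
  convert this using 2
  · ext x
    obtain ⟨k, hk⟩ := hc x
    have hk' : ((iq G x : ℝ) : ℂ) = ((c ⬝ᵥ (G *ᵥ x) : ℤ) : ℂ) + 2 * (k : ℂ) := by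
      have : iq G x = c ⬝ᵥ (G *ᵥ x) + 2 * k := by linarith
      rw [this]; push_cast; ring
    rw [Complex.exp_eq_exp_iff_exists_int]
    refine ⟨k, ?_⟩
    rw [hk']
    push_cast
    ring
  · congr 1; ext x
    congr 1
    have e : -(Real.pi : ℂ) / (I / τ) = Real.pi * I * τ := by
      rw [div_div_eq_mul_div]; field_simp; simp
    rw [e]
    have e2 : (fun i => (x i : ℝ) + -(c i : ℝ) / 2) = (fun i => (x i : ℝ) - (c i : ℝ) / 2) := by
      funext i; ring
    beta_reduce
    rw [e2]

lemma th_T2 {n : ℕ} (G : Matrix (Fin n) (Fin n) ℤ) (τ : ℂ) :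
    th (fun x => (iq G x : ℝ)) (τ + 2) = th (fun x => (iq G x : ℝ)) τ := by
  unfold th
  congr 1; ext x
  rw [Complex.exp_eq_exp_iff_exists_int]
  exact ⟨iq G x, by push_cast; ring⟩

lemma qf_half {n : ℕ} {G : Matrix (Fin n) (Fin n) ℤ} (c x : Fin n → ℤ) :
    qf (rmat G) (fun i => (x i : ℝ) + (-(c i : ℝ) / 2)) = (iq G (2 • x - c) : ℝ) / 4 := by
  rw [← qf_cast]
  have : (fun i => (x i : ℝ) + (-(c i : ℝ) / 2)) = (1/2 : ℝ) • (fun i => (((2 • x - c) i : ℤ) : ℝ)) := by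
    ext i; simp; ring
  rw [this]
  simp only [qf, Matrix.mulVec_smul, dotProduct_smul, smul_dotProduct, smul_eq_mul]
  ring

lemma qf_half_ge {n : ℕ} {G : Matrix (Fin n) (Fin n) ℤ} (hG : ElkLat n G) (c : Fin n → ℤ)
    (hc : ∀ x, (2 : ℤ) ∣ iq G x - c ⬝ᵥ (G *ᵥ x)) (x : Fin n → ℤ) :
    (n : ℝ) / 4 ≤ qf (rmat G) (fun i => (x i : ℝ) + (-(c i : ℝ) / 2)) := by
  rw [qf_half]
  have := hG.char (2 • x - c) (fun y => by
    obtain ⟨k, hk⟩ := hc y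
    refine ⟨k + c ⬝ᵥ (G *ᵥ y) - x ⬝ᵥ (G *ᵥ y), ?_⟩
    rw [sub_dotProduct, smul_dotProduct]
    simp only [nsmul_eq_mul]
    push_cast
    linarith)
  have h2 : (n : ℝ) ≤ (iq G (2 • x - c) : ℝ) := by exact_mod_cast this
  linarith

lemma exists_char {n : ℕ} {G : Matrix (Fin n) (Fin n) ℤ} (hG : ElkLat n G) :
    ∃ c : Fin n → ℤ, ∀ x, (2 : ℤ) ∣ iq G x - c ⬝ᵥ (G *ᵥ x) := by
  let d : Fin n → ℤ := fun i => G i i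
  have hsym : Gᵀ = G := by ext i j; exact hG.symm j i
  have hdiag : ∀ x : Fin n → ℤ, ((iq G x : ℤ) : ZMod 2) = ((d ⬝ᵥ x : ℤ) : ZMod 2) := by
    have hsw : ∀ x y : Fin n → ℤ, y ⬝ᵥ (G *ᵥ x) = x ⬝ᵥ (G *ᵥ y) := fun x y => by
      rw [Matrix.dotProduct_mulVec, ← Matrix.mulVec_transpose, hsym, dotProduct_comm]
    let f : (Fin n → ℤ) →+ ZMod 2 := AddMonoidHom.mk' (fun x => ((iq G x : ℤ) : ZMod 2)) (fun x y => by
      have : iq G (x + y) = iq G x + iq G y + 2 * (x ⬝ᵥ (G *ᵥ y)) := by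
        simp only [iq, Matrix.mulVec_add, dotProduct_add, add_dotProduct, hsw x y]; ring
      rw [this]; push_cast
      have : (2 : ZMod 2) = 0 := rfl
      rw [this]; ring)
    let g : (Fin n → ℤ) →+ ZMod 2 := AddMonoidHom.mk' (fun x => ((d ⬝ᵥ x : ℤ) : ZMod 2)) (fun x y => by
      rw [dotProduct_add]; push_cast; rfl)
    have : f = g := by
      apply AddMonoidHom.functions_ext'
      intro i
      ext
      simp [f, g, iq, d]
    intro x
    exact DFunLike.congr_fun this x
  refine ⟨G⁻¹ *ᵥ d, fun x => ?_⟩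
  have h1 : (G⁻¹ *ᵥ d) ⬝ᵥ (G *ᵥ x) = d ⬝ᵥ x := by
    rw [Matrix.dotProduct_mulVec, ← Matrix.mulVec_transpose, hsym, Matrix.mulVec_mulVec, Matrix.mul_nonsing_inv G hG.unit, Matrix.one_mulVec]
  rw [h1]
  have := hdiag x
  rw [← sub_eq_zero, ← Int.cast_sub, ZMod.intCast_zmod_eq_zero_iff_dvd] at this
  exact_mod_cast this

lemma iq_nonneg {n : ℕ} {G : Matrix (Fin n) (Fin n) ℤ} (hG : ElkLat n G) (x : Fin n → ℤ) : 0 ≤ iq G x := by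
  by_cases hx : x = 0
  · subst hx; simp [iq]
  · exact (hG.pos x hx).le

lemma summ_iq {n : ℕ} {G : Matrix (Fin n) (Fin n) ℤ} (hG : ElkLat n G) (t : ℝ) (ht : 0 < t) :
    Summable fun x : Fin n → ℤ => Real.exp (-Real.pi * t * (iq G x : ℝ)) := by
  simpa [qf_cast] using summQ (rmat G) (posDef_qf (rmat_posDef hG)) t ht 0

lemma U_finite {n : ℕ} {G : Matrix (Fin n) (Fin n) ℤ} (hG : ElkLat n G) : {x | iq G x = 1}.Finite := by
  have h := (summ_iq hG 1 one_pos).tendsto_cofinite_zero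
  have := h.eventually (gt_mem_nhds (Real.exp_pos (-Real.pi)))
  rw [Filter.eventually_cofinite] at this
  refine this.subset fun x hx => ?_
  have hx : iq G x = 1 := hx
  simp [hx]

/-- `θ = 1 + N q^{1/2} + O(q)`. -/
lemma th_expand {n : ℕ} {G : Matrix (Fin n) (Fin n) ℤ} (hG : ElkLat n G) :
    ∃ C, ∀ τ : ℂ, 1 ≤ τ.im →
      ‖th (fun x => (iq G x : ℝ)) τ - 1 - ({x | iq G x = 1}.ncard : ℂ) * cexp (Real.pi * I * τ)‖
        ≤ C * Real.exp (-Real.pi * 2 * τ.im) := by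
  classical
  have hU := U_finite hG
  let s : Finset (Fin n → ℤ) := insert 0 hU.toFinset
  have h0 : (0 : Fin n → ℤ) ∉ hU.toFinset := by simp [iq]
  obtain ⟨C, hC⟩ := th_bound (fun x : {x // x ∉ s} => (iq G x : ℝ)) 2 (fun x => by
    obtain ⟨x, hx⟩ := x
    simp [s] at hx
    have := hG.pos x hx.1
    have : 2 ≤ iq G x := by omega
    exact_mod_cast this) ((summ_iq hG 1 one_pos).subtype _)
  refine ⟨C, fun τ hτ => ?_⟩
  convert hC τ hτ using 2
  have hs : Summable fun x : Fin n → ℤ => cexp (Real.pi * I * τ * (iq G x : ℝ)) := by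
    apply Summable.of_norm
    simp_rw [norm_th_term]
    exact summ_iq hG _ (by linarith)
  have := hs.sum_add_tsum_subtype_compl s
  unfold th
  rw [← this]
  have h1 : ∑ x ∈ s, cexp (Real.pi * I * τ * (iq G x : ℝ)) = 1 + ({x | iq G x = 1}.ncard : ℂ) * cexp (Real.pi * I * τ) := by
    rw [Finset.sum_insert h0, Set.ncard_eq_toFinset_card _ hU]
    congr 1
    · simp [iq]
    · rw [← nsmul_eq_mul]
      apply Finset.sum_eq_card_nsmul
      intro x hx
      simp at hx
      simp [hx]
  rw [h1]
  ring

lemma atImInfty_ge_one : ∀ᶠ τ : ℍ in atImInfty, 1 ≤ (τ : ℂ).im := by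
  have : Tendsto UpperHalfPlane.im atImInfty atTop := tendsto_comap
  filter_upwards [this.eventually_ge_atTop 1] with τ hτ using hτ

lemma th_tendsto {n : ℕ} {G : Matrix (Fin n) (Fin n) ℤ} (hG : ElkLat n G) :
    Tendsto (fun τ : ℍ => th (fun x => (iq G x : ℝ)) τ) atImInfty (𝓝 1) := by
  obtain ⟨C, hC⟩ := th_expand hG
  have him : Tendsto UpperHalfPlane.im atImInfty atTop := tendsto_comap
  have hexp : ∀ k : ℝ, 0 < k → Tendsto (fun τ : ℍ => Real.exp (-Real.pi * k * τ.im)) atImInfty (𝓝 0) := by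
    intro k hk
    have h := him.const_mul_atTop (show 0 < Real.pi * k by positivity)
    refine (Real.tendsto_exp_neg_atTop_nhds_zero.comp h).congr fun τ => ?_
    simp
  have h1 : Tendsto (fun τ : ℍ => th (fun x => (iq G x : ℝ)) τ - 1 - ({x | iq G x = 1}.ncard : ℂ) * cexp (Real.pi * I * τ)) atImInfty (𝓝 0) := by
    have hb := (hexp 2 two_pos).const_mul C
    rw [mul_zero] at hb
    refine squeeze_zero_norm' ?_ hb
    filter_upwards [atImInfty_ge_one] with τ hτ using hC τ hτ
  have h2 : Tendsto (fun τ : ℍ => cexp (Real.pi * I * τ)) atImInfty (𝓝 0) := by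
    refine squeeze_zero_norm (fun τ => ?_) (hexp 1 one_pos)
    have := norm_th_term τ 1
    simp at this
    simp [this]
  have h3 := (h1.add (h2.const_mul ({x | iq G x = 1}.ncard : ℂ))).add_const 1
  simp only [mul_zero, add_zero, zero_add] at h3
  refine h3.congr fun τ => ?_
  ring

lemma factor_pow (n : ℕ) (τ : ℂ) (hτ : τ ≠ 0) : (((I / τ) ^ (1/2 : ℂ))⁻¹ ^ n) ^ 8 = τ ^ (4 * n) := by
  have h : ((I / τ) ^ (1/2 : ℂ)) ^ 2 = I / τ := by
    rw [← Complex.cpow_nat_mul]; norm_num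
  have h2 : ((I / τ) ^ (1/2 : ℂ)) ^ 8 = (τ ^ 4)⁻¹ := by
    rw [show 8 = 2 * 4 by rfl, pow_mul, h, div_pow]; simp
  rw [← pow_mul, mul_comm n, pow_mul, inv_pow, h2, inv_inv, pow_mul]

lemma th_eq {n : ℕ} {G H : Matrix (Fin n) (Fin n) ℤ} (hG : ElkLat n G) (hH : ElkLat n H) (τ : ℂ) (hτ : 0 < τ.im) :
    th (fun x => (iq G x : ℝ)) τ = th (fun x => (iq H x : ℝ)) τ := by
  obtain ⟨c, hc⟩ := exists_char hG
  obtain ⟨d, hd⟩ := exists_char hH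
  set tG := th (fun x => (iq G x : ℝ)) with htG
  set tH := th (fun x => (iq H x : ℝ)) with htH
  set cG := th (fun x : Fin n → ℤ => qf (rmat G) (fun i => (x i : ℝ) + (-(c i : ℝ) / 2))) with hcG
  set cH := th (fun x : Fin n → ℤ => qf (rmat H) (fun i => (x i : ℝ) + (-(d i : ℝ) / 2))) with hcH
  have nz : ∀ z : ℂ, 0 < z.im → z ≠ 0 := by rintro z hz rfl; simp at hz
  have := elk_vanish n (fun τ => (tG τ - tH τ) ^ 8) (fun τ => (cG τ - cH τ) ^ 8) ?_ ?_ ?_ ?_ ?_ ?_ τ hτ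
  · have := pow_eq_zero_iff (by norm_num) |>.1 this
    exact sub_eq_zero.1 this
  · refine DifferentiableOn.pow (DifferentiableOn.sub ?_ ?_) 8
    · exact th_diff _ (fun x => by exact_mod_cast iq_nonneg hG x) (fun t ht => summ_iq hG t ht)
    · exact th_diff _ (fun x => by exact_mod_cast iq_nonneg hH x) (fun t ht => summ_iq hH t ht)
  · intro z hz
    simp only [htG, htH, th_T2]
  · intro z hz
    simp only [htG, htH]
    rw [th_S hG z hz, th_S hH z hz, ← mul_sub, mul_pow, factor_pow n z (nz z hz)]
  · intro z hz
    simp only [htG, htH]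
    rw [th_TS hG c hc z hz, th_TS hH d hd z hz, ← mul_sub, mul_pow, factor_pow n z (nz z hz)]
  · have := ((th_tendsto hG).sub (th_tendsto hH)).pow 8
    simpa using this
  · obtain ⟨C, hC⟩ := th_bound _ _ (qf_half_ge hG c hc) (summQ _ (posDef_qf (rmat_posDef hG)) 1 one_pos _)
    obtain ⟨D, hD⟩ := th_bound _ _ (qf_half_ge hH d hd) (summQ _ (posDef_qf (rmat_posDef hH)) 1 one_pos _)
    have : (fun τ : ℍ => cG τ - cH τ) =O[atImInfty] fun τ : ℍ => Real.exp (-Real.pi * (n / 4) * τ.im) := by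
      refine Asymptotics.IsBigO.of_bound (C + D) ?_
      filter_upwards [atImInfty_ge_one] with τ hτ
      rw [Real.norm_of_nonneg (Real.exp_pos _).le, add_mul]
      exact (norm_sub_le _ _).trans (add_le_add (hC τ hτ) (hD τ hτ))
    refine (this.pow 8).congr_right fun τ => ?_
    rw [← Real.exp_nat_mul]
    congr 1
    push_cast
    ring

lemma count_eq {n : ℕ} {G H : Matrix (Fin n) (Fin n) ℤ} (hG : ElkLat n G) (hH : ElkLat n H) :
    {x | iq G x = 1}.ncard = {x | iq H x = 1}.ncard := by
  obtain ⟨C, hC⟩ := th_expand hG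
  obtain ⟨D, hD⟩ := th_expand hH
  set N := {x | iq G x = 1}.ncard
  set M := {x | iq H x = 1}.ncard
  have key : ∀ t : ℝ, 1 ≤ t → ‖(N : ℂ) - M‖ ≤ (C + D) * Real.exp (-Real.pi * t) := by
    intro t ht
    have him : (I * t : ℂ).im = t := by simp
    have h1 := hC (I * t) (by rw [him]; exact ht)
    have h2 := hD (I * t) (by rw [him]; exact ht)
    rw [th_eq hG hH (I * t) (by rw [him]; linarith)] at h1
    have h3 := norm_sub_le_of_le h2 h1
    have e : cexp (Real.pi * I * (I * t)) = (Real.exp (-Real.pi * t) : ℝ) := by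
      push_cast; congr 1; linear_combination (Real.pi * t : ℂ) * Complex.I_sq
    rw [him, e] at h3
    have e2 : Real.exp (-Real.pi * 2 * t) = Real.exp (-Real.pi * t) * Real.exp (-Real.pi * t) := by
      rw [← Real.exp_add]; ring_nf
    set E := Real.exp (-Real.pi * t) with hE
    have hEpos : 0 < E := Real.exp_pos _
    have h4 : ‖((N : ℂ) - M) * (E : ℂ)‖ ≤ (C + D) * E * E := by
      refine le_trans (le_of_eq ?_) (h3.trans (le_of_eq ?_))
      · congr 1; ring
      · rw [e2]; ring
    rw [norm_mul, Complex.norm_real, Real.norm_of_nonneg hEpos.le] at h4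
    exact le_of_mul_le_mul_right h4 hEpos
  have hlim : Tendsto (fun t : ℝ => (C + D) * Real.exp (-Real.pi * t)) atTop (𝓝 0) := by
    have h := tendsto_id.const_mul_atTop Real.pi_pos
    have := (Real.tendsto_exp_neg_atTop_nhds_zero.comp h).const_mul (C + D)
    simpa [Function.comp_def] using this
  have h0 : ‖(N : ℂ) - M‖ ≤ 0 := ge_of_tendsto hlim (by
    filter_upwards [eventually_ge_atTop 1] with t ht using key t ht)
  have := norm_le_zero_iff.1 h0
  exact_mod_cast sub_eq_zero.1 this

end

section
open Matrix
lemma iq_one {n : ℕ} (x : Fin n → ℤ) : iq 1 x = ∑ i, x i * x i := by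
  simp [iq, dotProduct]

lemma elkLat_one (n : ℕ) : ElkLat n 1 where
  symm i j := by simp [Matrix.one_apply, eq_comm]
  unit := by simp
  pos x hx := by
    rw [iq_one]
    obtain ⟨i, hi⟩ := Function.ne_iff.1 hx
    exact Finset.sum_pos' (fun i _ => mul_self_nonneg _) ⟨i, Finset.mem_univ _, mul_self_pos.2 hi⟩
  char c hc := by
    rw [iq_one]
    have h1 : ∀ i, (1 : ℤ) ≤ c i * c i := by
      intro i
      have := hc (Pi.single i 1)
      have h0 : c i ≠ 0 := by
        intro h0
        rw [Matrix.one_mulVec, dotProduct_single, h0] at this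
        simp [iq] at this
      have := mul_self_pos.2 h0
      omega
    calc (n : ℤ) = ∑ i : Fin n, (1 : ℤ) := by simp
      _ ≤ _ := Finset.sum_le_sum fun i _ => h1 i

lemma count_one (n : ℕ) : 2 * n ≤ {x : Fin n → ℤ | iq 1 x = 1}.ncard := by
  let f : Fin n ⊕ Fin n → (Fin n → ℤ) := Sum.elim (fun i => Pi.single i 1) (fun i => Pi.single i (-1))
  have hf : Function.Injective f := by
    have key : ∀ (i j : Fin n) (a b : ℤ), a ≠ 0 → (Pi.single i a : Fin n → ℤ) = Pi.single j b → i = j ∧ a = b := by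
      intro i j a b ha h
      have := congrFun h i
      by_cases hij : i = j
      · subst hij; simpa using this
      · simp [hij] at this; exact absurd this ha
    rintro (i | i) (j | j) h
    · rw [(key i j 1 1 (by norm_num) h).1]
    · exact absurd (key i j 1 (-1) (by norm_num) h).2 (by norm_num)
    · exact absurd (key i j (-1) 1 (by norm_num) h).2 (by norm_num)
    · rw [(key i j (-1) (-1) (by norm_num) h).1]
  have h1 : (Set.range f).ncard = 2 * n := by
    rw [← Set.image_univ, Set.ncard_image_of_injective _ hf, Set.ncard_univ]
    simp; ring
  rw [← h1]
  refine Set.ncard_le_ncard ?_ (U_finite (elkLat_one n))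
  rintro _ ⟨i | i, rfl⟩ <;> simp [f, iq]

lemma iq_neg {n : ℕ} (G : Matrix (Fin n) (Fin n) ℤ) (x : Fin n → ℤ) : iq G (-x) = iq G x := by
  simp [iq, Matrix.mulVec_neg]

lemma bil_symm {n : ℕ} {G : Matrix (Fin n) (Fin n) ℤ} (hG : ∀ i j, G i j = G j i) (x y : Fin n → ℤ) :
    x ⬝ᵥ (G *ᵥ y) = y ⬝ᵥ (G *ᵥ x) := by
  have : Gᵀ = G := by ext i j; exact hG j i
  rw [Matrix.dotProduct_mulVec, dotProduct_comm, ← Matrix.mulVec_transpose, this]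

lemma exists_half {n : ℕ} {G : Matrix (Fin n) (Fin n) ℤ} (hG : ElkLat n G) :
    ∃ p : Fin n → (Fin n → ℤ), Function.Injective p ∧ ∀ i, iq G (p i) = 1 ∧ 0 < toLex (p i) := by
  have hc : 2 * n ≤ {x | iq G x = 1}.ncard := by
    rw [count_eq hG (elkLat_one n)]; exact count_one n
  have hU := U_finite hG
  set O : Set (Fin n → ℤ) := {x | iq G x = 1 ∧ 0 < toLex x} with hO
  have hOf : O.Finite := hU.subset fun x hx => hx.1
  have hsub : {x | iq G x = 1} ⊆ O ∪ (fun x => -x) '' O := by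
    intro x hx
    have hx : iq G x = 1 := hx
    rcases lt_trichotomy (toLex x) 0 with h | h | h
    · right
      refine ⟨-x, ⟨by rw [iq_neg, hx], ?_⟩, by simp⟩
      rw [toLex_neg]
      exact neg_pos.2 h
    · have : x = 0 := h
      subst this
      simp [iq] at hx
    · left; exact ⟨hx, h⟩
  have h1 := Set.ncard_le_ncard hsub (hOf.union (hOf.image _))
  have h2 := Set.ncard_union_le O ((fun x => -x) '' O)
  have h3 := Set.ncard_image_le (f := fun x : Fin n → ℤ => -x) hOf
  have h4 : n ≤ O.ncard := by omega
  have : Fintype O := hOf.fintype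
  have h5 : Fintype.card (Fin n) ≤ Fintype.card O := by
    rw [Fintype.card_fin, ← Nat.card_eq_fintype_card]; exact h4
  obtain ⟨p⟩ := Function.Embedding.nonempty_of_card_le h5
  exact ⟨fun i => (p i : Fin n → ℤ), fun i j h => p.injective (Subtype.ext h), fun i => (p i).2⟩

lemma exists_orth {n : ℕ} {G : Matrix (Fin n) (Fin n) ℤ} (hG : ElkLat n G) :
    ∃ P : Matrix (Fin n) (Fin n) ℤ, P * G * Pᵀ = 1 := by
  obtain ⟨p, hp, hp1⟩ := exists_half hG
  refine ⟨Matrix.of p, ?_⟩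
  ext i j
  have e : (Matrix.of p * G * (Matrix.of p)ᵀ) i j = p i ⬝ᵥ (G *ᵥ p j) := by
    rw [Matrix.mul_assoc, Matrix.mul_apply]
    simp [dotProduct, Matrix.mulVec, Matrix.mul_apply]
  rw [e]
  by_cases hij : i = j
  · subst hij; rw [Matrix.one_apply_eq]; exact (hp1 i).1
  · rw [Matrix.one_apply_ne hij]
    have hi := (hp1 i).1
    have hj := (hp1 j).1
    have h1 := hG.pos (p i - p j) (sub_ne_zero.2 fun h => hij (hp h))
    have h2 := hG.pos (p i + p j) (by
      intro h
      have h3 : 0 < toLex (p i + p j) := by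
        rw [toLex_add]; exact add_pos (hp1 i).2 (hp1 j).2
      rw [h] at h3
      exact lt_irrefl _ h3)
    have hs := bil_symm hG.symm (p i) (p j)
    simp only [iq, Matrix.mulVec_add, Matrix.mulVec_sub, dotProduct_add, add_dotProduct,
      dotProduct_sub, sub_dotProduct] at h1 h2 hi hj
    omega

theorem elkies_aux
    (b : ℕ) (Λ : (Fin b → ℤ) →ₗ[ℤ] (Fin b → ℤ) →ₗ[ℤ] ℤ)
    (hsymm : ∀ x y, Λ x y = Λ y x)
    (hneg : ∀ x, x ≠ 0 → Λ x x < 0)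
    (hunimod :
      (Matrix.of fun i j => Λ (Pi.single i 1) (Pi.single j 1)).det = 1 ∨
      (Matrix.of fun i j => Λ (Pi.single i 1) (Pi.single j 1)).det = -1)
    (hchar : ∀ c : Fin b → ℤ, (∀ x, (2 : ℤ) ∣ (Λ x x - Λ c x)) →
      (b : ℤ) ≤ -(Λ c c)) :
    ∃ e : (Fin b → ℤ) ≃ₗ[ℤ] (Fin b → ℤ),
      ∀ x y, Λ (e x) (e y) = -∑ i, x i * y i := by
  set M : Matrix (Fin b) (Fin b) ℤ := Matrix.of fun i j => Λ (Pi.single i 1) (Pi.single j 1) with hM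
  have hΛ : ∀ x y, Λ x y = -(x ⬝ᵥ ((-M) *ᵥ y)) := by
    intro x y
    have hx : x = ∑ i, x i • (Pi.single i 1 : Fin b → ℤ) := pi_eq_sum_univ' x
    have hy : y = ∑ i, y i • (Pi.single i 1 : Fin b → ℤ) := pi_eq_sum_univ' y
    rw [Matrix.neg_mulVec, dotProduct_neg, neg_neg]
    conv_lhs => rw [hx, hy]
    simp only [map_sum, LinearMap.sum_apply, map_smul, LinearMap.smul_apply, smul_eq_mul,
      dotProduct, mulVec, Finset.mul_sum]
    rw [Finset.sum_comm]
    refine Finset.sum_congr rfl fun i _ => Finset.sum_congr rfl fun j _ => ?_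
    simp [hM]; ring
  have hG : ElkLat b (-M) := by
    refine ⟨fun i j => ?_, ?_, fun x hx => ?_, fun c hc => ?_⟩
    · simp [hM, hsymm (Pi.single i 1)]
    · rw [Matrix.det_neg]
      refine IsUnit.mul (IsUnit.pow _ isUnit_one.neg) ?_
      rcases hunimod with h | h <;> rw [h]
      · exact isUnit_one
      · exact isUnit_one.neg
    · have := hneg x hx
      rw [hΛ] at this
      unfold iq; linarith
    · have := hchar c (fun x => by
        obtain ⟨k, hk⟩ := hc x
        rw [hΛ x x, hΛ c x]
        unfold iq at hk
        exact ⟨-k, by linarith⟩)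
      rw [hΛ] at this
      unfold iq; linarith
  obtain ⟨P, hP⟩ := exists_orth hG
  have hdet : IsUnit (Pᵀ).det := by
    have := congrArg Matrix.det hP
    rw [Matrix.det_mul, Matrix.det_one] at this
    exact IsUnit.of_mul_eq_one_right _ this
  refine ⟨Matrix.toLinearEquiv' Pᵀ (Matrix.invertibleOfIsUnitDet _ hdet), fun x y => ?_⟩
  have he : ∀ x, (Matrix.toLinearEquiv' Pᵀ (Matrix.invertibleOfIsUnitDet _ hdet)) x = Pᵀ *ᵥ x := fun x => rfl
  rw [he, he, hΛ, Matrix.mulVec_transpose P x, ← Matrix.dotProduct_mulVec, Matrix.mulVec_mulVec,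
    Matrix.mulVec_mulVec, hP, Matrix.one_mulVec]
  rfl

end

/-- The theorem of Elkies: a unimodular negative definite symmetric bilinear form on
`ℤ^b` all of whose characteristic vectors `c` satisfy `−Λ(c,c) ≥ b` is
isomorphic over `ℤ` to the standard diagonal form `⟨−1⟩^b`. -/
theorem elkies_diagonalization
    (b : ℕ) (Λ : (Fin b → ℤ) →ₗ[ℤ] (Fin b → ℤ) →ₗ[ℤ] ℤ)
    (hsymm : ∀ x y, Λ x y = Λ y x)
    (hneg : ∀ x, x ≠ 0 → Λ x x < 0)
    (hunimod :
      (Matrix.of fun i j => Λ (Pi.single i 1) (Pi.single j 1)).det = 1 ∨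
      (Matrix.of fun i j => Λ (Pi.single i 1) (Pi.single j 1)).det = -1)
    (hchar : ∀ c : Fin b → ℤ, (∀ x, (2 : ℤ) ∣ (Λ x x - Λ c x)) →
      (b : ℤ) ≤ -(Λ c c)) :
    ∃ e : (Fin b → ℤ) ≃ₗ[ℤ] (Fin b → ℤ),
      ∀ x y, Λ (e x) (e y) = -∑ i, x i * y i :=
  elkies_aux b Λ hsymm hneg hunimod hchar
end
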